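/- arXiv:2307.02517 — 2 statements merged into one kernel-verified Lean document; each statement's English description precedes it below -/
import Mathlib

section
/- There exists an absolute constant C > 0 such that for every finite connected graph G with at least two vertices, η(G) ≤ C · ζ(G). -/
open SimpleGraph

/-- The vertex type of the `m`-subdivision of a simple graph `G`:
branch vertices (`Sum.inl`) together with, for each edge (oriented from its
smaller to its larger endpoint) and each `i : Fin (m-1)`, the internal vertex
of the corresponding thread at distance `i+1` from the smaller endpoint. -/
abbrev SubVert (V : Type*) [LinearOrder V] (G : SimpleGraph V) (m : ℕ) : Type _ :=
  V ⊕ ({e : V × V // G.Adj e.1 e.2 ∧ e.1 < e.2} × Fin (m - 1))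

/-- Basic adjacency generating relation for the `m`-subdivision. -/
def subPre {V : Type*} [LinearOrder V] (G : SimpleGraph V) (m : ℕ) :
    SubVert V G m → SubVert V G m → Prop
  | Sum.inl u, Sum.inl v => m = 1 ∧ G.Adj u v
  | Sum.inl u, Sum.inr ei => (u = ei.1.1.1 ∧ (ei.2 : ℕ) = 0) ∨ (u = ei.1.1.2 ∧ (ei.2 : ℕ) + 2 = m)
  | Sum.inr ei, Sum.inr ej => ei.1 = ej.1 ∧ (ei.2 : ℕ) + 1 = (ej.2 : ℕ)
  | Sum.inr _, Sum.inl _ => False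

/-- The `m`-subdivision `G^{1/m}` of `G`: every edge of `G` is replaced by a
path (thread) of length `m`. -/
def Subdiv {V : Type*} [LinearOrder V] (G : SimpleGraph V) (m : ℕ) :
    SimpleGraph (SubVert V G m) :=
  SimpleGraph.fromRel (subPre G m)

/-- The vertex of `G^{1/m}` lying on the thread replacing the edge `{w₁, w₂}`
at distance `x` along the thread from `w₁` (for `0 ≤ x ≤ m`). -/
def threadVert {V : Type*} [LinearOrder V] (G : SimpleGraph V) (m : ℕ) (w₁ w₂ : V)
    (h : G.Adj w₁ w₂) (x : ℕ) : SubVert V G m :=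
  if hx0 : x = 0 then Sum.inl w₁
  else if hxm : m ≤ x then Sum.inl w₂
  else if hlt : w₁ < w₂ then
    Sum.inr (⟨(w₁, w₂), h, hlt⟩, ⟨x - 1, by omega⟩)
  else
    Sum.inr (⟨(w₂, w₁), h.symm, lt_of_le_of_ne (not_lt.mp hlt) h.ne'⟩, ⟨m - x - 1, by omega⟩)

/-- A vertex of `G^{1/m}` lies on the thread replacing the edge `{w₁, w₂}`. -/
def OnThread {V : Type*} [LinearOrder V] (G : SimpleGraph V) (m : ℕ) (w₁ w₂ : V)
    (h : G.Adj w₁ w₂) (v : SubVert V G m) : Prop :=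
  ∃ x ≤ m, v = threadVert G m w₁ w₂ h x
/-- A robber trajectory: at each time step the robber stays put or moves
to an adjacent vertex. -/
def ValidTraj {V : Type*} (G : SimpleGraph V) (r : ℕ → V) : Prop :=
  ∀ t, r (t + 1) = r t ∨ G.Adj (r t) (r (t + 1))

/-- A deterministic cop strategy for `k` cops: a function from the list of
probe results of all previous rounds (each round's results being the `k`
probed distances) to the `k` vertices probed in the current round. -/
abbrev CopStrategy (V : Type*) (k : ℕ) := List (Fin k → ℕ) → (Fin k → V)

/-- The history of probe results after `t` rounds, when strategy `A` plays
against the robber trajectory `r`. -/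
noncomputable def probeHist {V : Type*} (G : SimpleGraph V) {k : ℕ} (A : CopStrategy V k)
    (r : ℕ → V) : ℕ → List (Fin k → ℕ)
  | 0 => []
  | t + 1 => probeHist G A r t ++ [fun i => G.dist (A (probeHist G A r t) i) (r t)]

/-- The set of robber positions consistent with all probe results received
through round `t` (inclusive), when `A` plays against trajectory `r`. -/
def RSet {V : Type*} (G : SimpleGraph V) {k : ℕ} (A : CopStrategy V k)
    (r : ℕ → V) (t : ℕ) : Set V :=
  {w | ∃ r', ValidTraj G r' ∧ probeHist G A r' (t + 1) = probeHist G A r (t + 1) ∧ r' t = w}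

/-- A cop strategy is winning if against every robber trajectory, after
finitely many rounds the consistent set becomes a singleton. -/
def CopWinning {V : Type*} (G : SimpleGraph V) {k : ℕ} (A : CopStrategy V k) : Prop :=
  ∀ r : ℕ → V, ValidTraj G r → ∃ t, RSet G A r t = {r t}

/-- `G` is localizable with `k` cops. -/
def Localizable {V : Type*} (G : SimpleGraph V) (k : ℕ) : Prop :=
  ∃ A : CopStrategy V k, CopWinning G A

/-- The localization number `ζ(G)`. -/
noncomputable def locNum {V : Type*} (G : SimpleGraph V) : ℕ :=
  sInf {k | Localizable G k}

/-- The subdivision number `η(G)`: the least `m ≥ 1` such that `G^{1/m}` is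
localizable with one cop. -/
noncomputable def subdivNum {V : Type*} [LinearOrder V] (G : SimpleGraph V) : ℕ :=
  sInf {m | 1 ≤ m ∧ Localizable (Subdiv G m) 1}

/-- The capture time: the least `T` such that some strategy with `k` cops is
guaranteed to locate the robber within `T` rounds. -/
noncomputable def captTime {V : Type*} (G : SimpleGraph V) (k : ℕ) : ℕ :=
  sInf {T | ∃ A : CopStrategy V k, ∀ r : ℕ → V, ValidTraj G r → ∃ t < T, RSet G A r t = {r t}}

/-- The node set of the cop strategy graph `H_A` of a strategy `A`: all game
states (identified with the information available to the cops, i.e. the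
history of probe results) reachable under `A` along some robber trajectory
without passing beyond a terminating state. -/
def StrategyStates {V : Type*} (G : SimpleGraph V) {k : ℕ} (A : CopStrategy V k) :
    Set (List (Fin k → ℕ)) :=
  {h | ∃ r t, ValidTraj G r ∧ h = probeHist G A r t ∧
    ∀ s, s + 1 < t → RSet G A r s ≠ {r s}}

/-!
The bound is `η(G) ≤ 2 ζ(G) + 3`. Subdivide into threads of odd length `2M + 1` with `M = ζ(G) + 1`,
so that every vertex has a unique nearest branch vertex, at distance `y ≤ M`. The distance from a
branch vertex `w` to the robber is congruent to `± y` modulo `2M + 1`, so each probe of a branch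
vertex reveals both `y` and the distance in `G` from `w` to the nearest branch vertex. A robber
needs `M` moves to get from the middle of a thread to a branch vertex, which leaves the single cop
time to carry out, one probe after the other, all the probes of the next round of a winning strategy
on `G`. A robber staying inside a thread is caught by probing branch vertices that split the set
`E` of possible edges: the answer tells whether the edge contains the probed vertex. Since the space
of trajectories is compact, a winning strategy wins within a bounded number of rounds, so the game
can be replaced by an inductive definition of winning positions.
-/

section Game

variable {V : Type*} {G : SimpleGraph V} {k : ℕ}

/-- The vertices a robber starting in `X` can occupy after one move. -/
def closedNbhd (G : SimpleGraph V) (X : Set V) : Set V :=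
  {w | ∃ v ∈ X, w = v ∨ G.Adj v w}

/-- The result of probing the vertices `p` while the robber is at `v`. -/
noncomputable def probeAnswer (G : SimpleGraph V) (p : Fin k → V) (v : V) : Fin k → ℕ :=
  fun i => G.dist (p i) v

/-- The candidates in `S` that remain when the probe `p` is answered by `a`. -/
def consistent (G : SimpleGraph V) (S : Set V) (p : Fin k → V) (a : Fin k → ℕ) : Set V :=
  {v ∈ S | probeAnswer G p v = a}

/-- The cops win when, before their next probe, the robber is known to be in `S`. This is the
history-free form of the game: only the current set of candidates matters. -/
inductive CopsWin (G : SimpleGraph V) (k : ℕ) : Set V → Prop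
  | probe (S : Set V) (p : Fin k → V)
      (h : ∀ a, ¬ (consistent G S p a).Subsingleton →
        CopsWin G k (closedNbhd G (consistent G S p a))) :
      CopsWin G k S

/-- The cops win when, after a probe, the robber is known to be in `X`. -/
def CopsWinAfterProbe (G : SimpleGraph V) (k : ℕ) (X : Set V) : Prop :=
  ¬ X.Subsingleton → CopsWin G k (closedNbhd G X)

theorem subset_closedNbhd (X : Set V) : X ⊆ closedNbhd G X :=
  fun v hv => ⟨v, hv, Or.inl rfl⟩

theorem closedNbhd_mono {X Y : Set V} (h : X ⊆ Y) : closedNbhd G X ⊆ closedNbhd G Y :=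
  fun _ ⟨v, hv, hvw⟩ => ⟨v, h hv, hvw⟩

theorem consistent_mono {S T : Set V} (h : S ⊆ T) (p : Fin k → V) (a : Fin k → ℕ) :
    consistent G S p a ⊆ consistent G T p a :=
  fun _ hv => ⟨h hv.1, hv.2⟩

theorem CopsWin.mono {S T : Set V} (hT : CopsWin G k T) (h : S ⊆ T) : CopsWin G k S := by
  induction hT generalizing S with
  | probe T p _ ih =>
    have hsub := consistent_mono (G := G) h p
    exact .probe S p fun a ha =>
      ih a (fun hs => ha (hs.anti (hsub a))) (closedNbhd_mono (hsub a))

theorem CopsWinAfterProbe.mono {X Y : Set V} (hY : CopsWinAfterProbe G k Y) (h : X ⊆ Y) :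
    CopsWinAfterProbe G k X :=
  fun hX => (hY fun hs => hX (hs.anti h)).mono (closedNbhd_mono h)

theorem copsWinAfterProbe_of_subsingleton {X : Set V} (h : X.Subsingleton) :
    CopsWinAfterProbe G k X :=
  fun hX => absurd h hX

theorem CopsWin.of_injective_probeAnswer {p : Fin k → V}
    (hp : Function.Injective (probeAnswer G p)) (S : Set V) : CopsWin G k S :=
  .probe S p fun _ ha => absurd (fun _ hv _ hw => hp (hv.2.trans hw.2.symm)) ha

theorem CopsWin.subsingleton_of_zero_cops {S : Set V} (h : CopsWin G 0 S) : S.Subsingleton := by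
  induction h with
  | probe S p _ ih =>
    by_contra hS
    have hcons : consistent G S p 0 = S :=
      Set.sep_eq_self_iff_mem_true.2 fun _ _ => Subsingleton.elim _ _
    have hnbhd := ih 0 (hcons.symm ▸ hS)
    rw [hcons] at hnbhd
    exact hS (hnbhd.anti (subset_closedNbhd S))

/-- The strategy that remains of `A` once the first probe has been answered by `a`. -/
def strategyAfter (A : CopStrategy V k) (a : Fin k → ℕ) : CopStrategy V k :=
  fun l => A (a :: l)

/-- When the robber is known to start in `S`, the strategy `A` playing against the trajectory `r`
determines its position after the probe of round `t`. -/
def Locates (G : SimpleGraph V) (A : CopStrategy V k) (S : Set V) (r : ℕ → V) (t : ℕ) : Prop :=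
  ∀ r', ValidTraj G r' → r' 0 ∈ S →
    probeHist G A r' (t + 1) = probeHist G A r (t + 1) → r' t = r t

theorem RSet_eq_singleton_iff_locates {A : CopStrategy V k} {r : ℕ → V} (hr : ValidTraj G r)
    (t : ℕ) : RSet G A r t = {r t} ↔ Locates G A Set.univ r t := by
  have hmem : r t ∈ RSet G A r t := ⟨r, hr, rfl, rfl⟩
  rw [Set.eq_singleton_iff_unique_mem, and_iff_right hmem]
  constructor
  · exact fun h r' hr' _ heq => h _ ⟨r', hr', heq, rfl⟩
  · rintro h _ ⟨r', hr', heq, rfl⟩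
    exact h r' hr' trivial heq

theorem probeHist_succ_eq_cons (A : CopStrategy V k) (r : ℕ → V) (t : ℕ) :
    probeHist G A r (t + 1) = probeAnswer G (A []) (r 0) ::
      probeHist G (strategyAfter A (probeAnswer G (A []) (r 0))) (fun s => r (s + 1)) t := by
  induction t with
  | zero => rfl
  | succ t ih => rw [probeHist, ih]; rfl

theorem probeHist_succ_eq_iff (A : CopStrategy V k) (r r' : ℕ → V) (t : ℕ) :
    probeHist G A r' (t + 1) = probeHist G A r (t + 1) ↔
      probeAnswer G (A []) (r' 0) = probeAnswer G (A []) (r 0) ∧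
        probeHist G (strategyAfter A (probeAnswer G (A []) (r 0))) (fun s => r' (s + 1)) t =
          probeHist G (strategyAfter A (probeAnswer G (A []) (r 0))) (fun s => r (s + 1)) t := by
  rw [probeHist_succ_eq_cons, probeHist_succ_eq_cons, List.cons.injEq]
  exact and_congr_right fun h => by rw [h]

theorem probeHist_congr (A : CopStrategy V k) {r r' : ℕ → V} {t : ℕ}
    (h : ∀ s < t, r s = r' s) : probeHist G A r t = probeHist G A r' t := by
  induction t with
  | zero => rfl
  | succ t ih =>
    rw [probeHist, probeHist, ih fun s hs => h s (hs.trans t.lt_succ_self), h t t.lt_succ_self]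

theorem locates_zero_iff {A : CopStrategy V k} {S : Set V} {r : ℕ → V} (hr : r 0 ∈ S) :
    Locates G A S r 0 ↔
      (consistent G S (A []) (probeAnswer G (A []) (r 0))).Subsingleton := by
  have hhist (r' : ℕ → V) : probeHist G A r' (0 + 1) = probeHist G A r (0 + 1) ↔
      probeAnswer G (A []) (r' 0) = probeAnswer G (A []) (r 0) :=
    (probeHist_succ_eq_iff A r r' 0).trans (and_iff_left rfl)
  constructor
  · intro h
    have hall : ∀ v ∈ consistent G S (A []) (probeAnswer G (A []) (r 0)), v = r 0 :=
      fun v hv => h (fun _ => v) (fun _ => Or.inl rfl) hv.1 ((hhist _).2 hv.2)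
    exact fun v hv w hw => (hall v hv).trans (hall w hw).symm
  · exact fun h r' _ hr' heq => h ⟨hr', (hhist r').1 heq⟩ ⟨hr, rfl⟩

theorem locates_succ_iff {A : CopStrategy V k} {S : Set V} {r : ℕ → V} {t : ℕ} :
    Locates G A S r (t + 1) ↔
      Locates G (strategyAfter A (probeAnswer G (A []) (r 0)))
        (closedNbhd G (consistent G S (A []) (probeAnswer G (A []) (r 0))))
        (fun s => r (s + 1)) t := by
  constructor
  · rintro h r' hr' ⟨v, hv, hvr'⟩ heq
    refine h (fun s => s.casesOn v r') ?_ hv.1 ((probeHist_succ_eq_iff ..).2 ⟨hv.2, heq⟩)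
    rintro (_ | s)
    exacts [hvr', hr' s]
  · intro h r' hr' hr'S heq
    obtain ⟨hanswer, hhist⟩ := (probeHist_succ_eq_iff ..).1 heq
    exact h _ (fun s => hr' (s + 1)) ⟨r' 0, ⟨hr'S, hanswer⟩, hr' 0⟩ hhist

theorem CopsWin.exists_strategy {S : Set V} (h : CopsWin G k S) :
    ∃ A : CopStrategy V k, ∀ r, ValidTraj G r → r 0 ∈ S → ∃ t, Locates G A S r t := by
  induction h with
  | probe S p _ ih =>
    have hnext : ∀ a, ∃ A : CopStrategy V k, ¬ (consistent G S p a).Subsingleton →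
        ∀ r, ValidTraj G r → r 0 ∈ closedNbhd G (consistent G S p a) →
          ∃ t, Locates G A (closedNbhd G (consistent G S p a)) r t := by
      intro a
      by_cases ha : (consistent G S p a).Subsingleton
      · exact ⟨fun _ => p, fun hns => absurd ha hns⟩
      · exact (ih a ha).imp fun A hA _ => hA
    choose next hnext using hnext
    refine ⟨fun l => l.casesOn p next, fun r hr hrS => ?_⟩
    by_cases ha : (consistent G S p (probeAnswer G p (r 0))).Subsingleton
    · exact ⟨0, (locates_zero_iff hrS).2 ha⟩
    · obtain ⟨t, ht⟩ := hnext _ ha (fun s => r (s + 1)) (fun s => hr (s + 1))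
        ⟨r 0, ⟨hrS, rfl⟩, hr 0⟩
      exact ⟨t + 1, locates_succ_iff.2 ht⟩

theorem CopsWin.localizable (h : CopsWin G k Set.univ) : Localizable G k := by
  obtain ⟨A, hA⟩ := h.exists_strategy
  exact ⟨A, fun r hr =>
    (hA r hr trivial).imp fun t => (RSet_eq_singleton_iff_locates hr t).2⟩

theorem CopsWin.of_strategy_of_bounded {A : CopStrategy V k} {S : Set V} {T : ℕ}
    (hA : ∀ r, ValidTraj G r → r 0 ∈ S → ∃ t < T, Locates G A S r t) : CopsWin G k S := by
  refine .probe S (A []) fun a ha => ?_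
  induction T generalizing A S a with
  | zero =>
    obtain ⟨v, hv⟩ := (Set.not_subsingleton_iff.1 ha).nonempty
    obtain ⟨t, ht, _⟩ := hA (fun _ => v) (fun _ => Or.inl rfl) hv.1
    exact absurd ht t.not_lt_zero
  | succ T ih =>
    refine .probe _ (strategyAfter A a []) (ih fun r hr hrX => ?_)
    obtain ⟨v, hv, hvr⟩ := hrX
    let r' : ℕ → V := fun s => s.casesOn v r
    have hr' : ValidTraj G r' := by
      rintro (_ | s)
      exacts [hvr, hr s]
    obtain ⟨t, ht, hloc⟩ := hA r' hr' hv.1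
    obtain rfl : probeAnswer G (A []) v = a := hv.2
    cases t with
    | zero => exact absurd ((locates_zero_iff hv.1).1 hloc) ha
    | succ t => exact ⟨t, Nat.lt_of_succ_lt_succ ht, locates_succ_iff.1 hloc⟩

theorem isClosed_setOf_validTraj [TopologicalSpace V] [DiscreteTopology V] (G : SimpleGraph V) :
    IsClosed {r | ValidTraj G r} := by
  have hinter : {r | ValidTraj G r} =
      ⋂ t, (fun r : ℕ → V => (r t, r (t + 1))) ⁻¹' {q | q.2 = q.1 ∨ G.Adj q.1 q.2} := by
    ext r
    simp only [ValidTraj, Set.mem_ofPred_eq, Set.mem_iInter, Set.mem_preimage]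
  rw [hinter]
  exact isClosed_iInter fun t =>
    (isClosed_discrete _).preimage
      ((continuous_apply t).prodMk (continuous_apply (t + 1)))

theorem isOpen_setOf_locates [TopologicalSpace V] [DiscreteTopology V] (A : CopStrategy V k)
    (S : Set V) (t : ℕ) : IsOpen {r | Locates G A S r t} := by
  refine isOpen_iff_forall_mem_open.2 fun r hr => ⟨(Set.Iic t).pi fun s => {r s}, ?_,
    isOpen_set_pi (Set.finite_Iic t) fun _ _ => isOpen_discrete _, fun _ _ => rfl⟩
  intro r₁ hr₁ r' hr' hr'S heq
  have hhist : probeHist G A r₁ (t + 1) = probeHist G A r (t + 1) :=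
    probeHist_congr A fun s hs => hr₁ s (Nat.le_of_lt_succ hs)
  exact (hr r' hr' hr'S (heq.trans hhist)).trans (hr₁ t (Set.mem_Iic.2 le_rfl)).symm

theorem CopWinning.exists_bound [Finite V] {A : CopStrategy V k} (hA : CopWinning G A) :
    ∃ T, ∀ r, ValidTraj G r → ∃ t < T, Locates G A Set.univ r t := by
  let _ : TopologicalSpace V := ⊥
  have _ : DiscreteTopology V := ⟨rfl⟩
  obtain ⟨rounds, hrounds⟩ := (isClosed_setOf_validTraj G).isCompact.elim_finite_subcover
    (fun t => {r | Locates G A Set.univ r t}) (isOpen_setOf_locates A Set.univ) fun r hr =>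
      Set.mem_iUnion.2 ((hA r hr).imp fun t => (RSet_eq_singleton_iff_locates hr t).1)
  refine ⟨rounds.sup id + 1, fun r hr => ?_⟩
  obtain ⟨t, ht, hloc⟩ := Set.mem_iUnion₂.1 (hrounds hr)
  exact ⟨t, Nat.lt_succ_of_le (Finset.le_sup (f := id) ht), hloc⟩

theorem Localizable.copsWin [Finite V] (h : Localizable G k) : CopsWin G k Set.univ := by
  obtain ⟨A, hA⟩ := h
  obtain ⟨T, hT⟩ := hA.exists_bound
  exact .of_strategy_of_bounded fun r hr _ => hT r hr

theorem localizable_natCard [Finite V] (hG : G.Connected) : Localizable G (Nat.card V) := by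
  refine (CopsWin.of_injective_probeAnswer (p := (Finite.equivFin V).symm) ?_ _).localizable
  intro v w h
  have hdist : G.dist v v = G.dist v w := by
    simpa only [probeAnswer, Equiv.symm_apply_apply] using congrFun h (Finite.equivFin V v)
  rw [dist_self, eq_comm] at hdist
  exact hG.dist_eq_zero_iff.1 hdist

theorem localizable_locNum [Finite V] (hG : G.Connected) : Localizable G (locNum G) :=
  Nat.sInf_mem (s := {k | Localizable G k}) ⟨Nat.card V, localizable_natCard hG⟩

theorem locNum_pos [Finite V] [Nontrivial V] (hG : G.Connected) : 0 < locNum G := by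
  refine Nat.pos_of_ne_zero fun h => ?_
  have hwin := (localizable_locNum hG).copsWin
  rw [h] at hwin
  exact Set.not_subsingleton_iff.2 Set.nontrivial_univ hwin.subsingleton_of_zero_cops

end Game

section Graph

variable {V : Type*} {G : SimpleGraph V}

theorem exists_dart_fst_eq [Nontrivial V] (hG : G.Connected) (v : V) : ∃ d : G.Dart, d.fst = v := by
  obtain ⟨w, h⟩ := hG.preconnected.exists_adj_of_nontrivial v
  exact ⟨⟨(v, w), h⟩, rfl⟩

theorem dist_le_dist_add_one (w : V) {u v : V} (h : G.Adj u v) :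
    G.dist w v ≤ G.dist w u + 1 := by
  have := h.diff_dist_adj (u := w)
  omega

theorem le_add_length_of_lipschitz {f : V → ℕ}
    (hf : ∀ u v, G.Adj u v → f v ≤ f u + 1) {u v : V} (p : G.Walk u v) :
    f v ≤ f u + p.length := by
  induction p with
  | nil => exact le_rfl
  | cons h p ih => have := hf _ _ h; rw [Walk.length_cons]; omega

end Graph

section Subdivision

variable {V : Type*} [LinearOrder V] {G : SimpleGraph V} {m x y : ℕ}

/-- The vertex of `G^{1/m}` at distance `x` from the start of the dart `d` along its thread. Darts
rather than edges index the threads, so that no direction has to be singled out. -/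
def dartVert (m : ℕ) (d : G.Dart) (x : ℕ) : SubVert V G m :=
  threadVert G m d.fst d.snd d.adj x

theorem dartVert_zero (d : G.Dart) : dartVert m d 0 = Sum.inl d.fst := rfl

theorem dartVert_self (hm : 0 < m) (d : G.Dart) : dartVert m d m = Sum.inl d.snd := by
  simp [dartVert, threadVert, hm.ne']

theorem dartVert_of_lt {d : G.Dart} (hd : d.fst < d.snd) (hx0 : 0 < x) (hxm : x < m) :
    dartVert m d x = Sum.inr (⟨d.toProd, d.adj, hd⟩, ⟨x - 1, by omega⟩) := by
  rw [dartVert, threadVert, dif_neg hx0.ne', dif_neg hxm.not_ge, dif_pos hd]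

theorem threadVert_symm (hm : 0 < m) {u v : V} (h : G.Adj u v) (hx : x ≤ m) :
    threadVert G m v u h.symm x = threadVert G m u v h (m - x) := by
  rcases x.eq_zero_or_pos with rfl | hx0
  · simp [threadVert, hm.ne']
  rcases hx.eq_or_lt with rfl | hxm
  · simp [threadVert, hm.ne']
  simp only [threadVert, dif_neg hx0.ne', dif_neg hxm.not_ge, dif_neg (Nat.sub_pos_of_lt hxm).ne',
    dif_neg (Nat.sub_lt hm hx0).not_ge]
  rcases h.ne.lt_or_gt with huv | huv
  · rw [dif_neg huv.not_gt, dif_pos huv]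
  · rw [dif_pos huv, dif_neg huv.not_gt]
    simp only [Nat.sub_sub_self hx]

theorem dartVert_symm (hm : 0 < m) (d : G.Dart) (hx : x ≤ m) :
    dartVert m d.symm x = dartVert m d (m - x) :=
  threadVert_symm hm d.adj hx

theorem dartVert_ne_inl (d : G.Dart) (hx0 : 0 < x) (hxm : x < m) (v : V) :
    dartVert m d x ≠ Sum.inl v := by
  rw [dartVert, threadVert, dif_neg hx0.ne', dif_neg hxm.not_ge]
  split <;> exact Sum.inr_ne_inl

theorem fst_lt_snd_or_symm (d : G.Dart) : d.fst < d.snd ∨ d.symm.fst < d.symm.snd :=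
  d.fst_ne_snd.lt_or_gt

theorem dartVert_eq_dartVert_iff_of_lt {d d' : G.Dart} (hd : d.fst < d.snd)
    (hd' : d'.fst < d'.snd) (hx0 : 0 < x) (hxm : x < m) (hy0 : 0 < y) (hym : y < m) :
    dartVert m d x = dartVert m d' y ↔ d = d' ∧ x = y := by
  rw [dartVert_of_lt hd hx0 hxm, dartVert_of_lt hd' hy0 hym, Sum.inr.injEq, Prod.mk.injEq,
    Subtype.mk.injEq, Fin.mk.injEq, Dart.ext_iff]
  exact and_congr_right fun _ => by omega

theorem eq_or_eq_symm_of_dartVert_eq {d d' : G.Dart} (hx0 : 0 < x) (hxm : x < m) (hym : y < m)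
    (h : dartVert m d x = dartVert m d' y) : d = d' ∧ x = y ∨ d = d'.symm ∧ x + y = m := by
  have hm : 0 < m := hx0.trans hxm
  have hy0 : 0 < y := by
    refine y.pos_of_ne_zero ?_
    rintro rfl
    exact dartVert_ne_inl d hx0 hxm _ h
  wlog hd : d.fst < d.snd generalizing d x
  · have h' : dartVert m d.symm (m - x) = dartVert m d' y := by
      rw [dartVert_symm hm d (m.sub_le x), Nat.sub_sub_self hxm.le, h]
    rcases this (by omega) (by omega) h' ((fst_lt_snd_or_symm d).resolve_left hd) with
      ⟨rfl, hxy⟩ | ⟨heq, hxy⟩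
    · exact Or.inr ⟨d.symm_symm.symm, by omega⟩
    · exact Or.inl ⟨Dart.symm_involutive.injective heq, by omega⟩
  rcases fst_lt_snd_or_symm d' with hd' | hd'
  · exact Or.inl ((dartVert_eq_dartVert_iff_of_lt hd hd' hx0 hxm hy0 hym).1 h)
  · have h' : dartVert m d x = dartVert m d'.symm (m - y) := by
      rw [dartVert_symm hm d' (m.sub_le y), Nat.sub_sub_self hym.le, h]
    obtain ⟨heq, hxy⟩ :=
      (dartVert_eq_dartVert_iff_of_lt hd hd' hx0 hxm (by omega) (by omega)).1 h'
    exact Or.inr ⟨heq, by omega⟩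

theorem exists_dart_of_subPre (hm : 0 < m) {z z' : SubVert V G m} (h : subPre G m z z') :
    ∃ d : G.Dart, ∃ x < m, z = dartVert m d x ∧ z' = dartVert m d (x + 1) := by
  rcases z with u | ⟨⟨e, he, hlt⟩, i, hi⟩ <;> rcases z' with v | ⟨⟨e', he', hlt'⟩, j, hj⟩
  · obtain ⟨rfl, h⟩ := h
    exact ⟨⟨(u, v), h⟩, 0, hm, rfl, (dartVert_self hm ⟨(u, v), h⟩).symm⟩
  · let d : G.Dart := ⟨e', he'⟩
    rcases h with ⟨rfl, h⟩ | ⟨rfl, h⟩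
    · refine ⟨d, 0, hm, rfl, ?_⟩
      obtain rfl : j = 0 := h
      exact (dartVert_of_lt (d := d) hlt' (Nat.zero_lt_one) (by omega)).symm
    · refine ⟨d.symm, 0, hm, rfl, ?_⟩
      change j + 2 = m at h
      rw [dartVert_symm hm d (by omega), dartVert_of_lt hlt' (by omega) (by omega)]
      simp only [Sum.inr.injEq, Prod.mk.injEq, Fin.mk.injEq]
      exact ⟨rfl, by omega⟩
  · exact h.elim
  · obtain ⟨he, h⟩ := h
    obtain rfl : e = e' := congrArg Subtype.val he
    obtain rfl : i + 1 = j := h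
    let d : G.Dart := ⟨e, ‹_›⟩
    refine ⟨d, i + 1, by omega, ?_, ?_⟩
    · rw [dartVert_of_lt hlt (by omega) (by omega)]; rfl
    · rw [dartVert_of_lt hlt (by omega) (by omega)]; rfl

theorem dartVert_adj_succ (hm : 0 < m) (d : G.Dart) (hx : x < m) :
    (Subdiv G m).Adj (dartVert m d x) (dartVert m d (x + 1)) := by
  wlog hd : d.fst < d.snd generalizing d x
  · have hsymm := this d.symm (x := m - (x + 1)) (by omega)
      ((fst_lt_snd_or_symm d).resolve_left hd)
    rw [dartVert_symm hm d (by omega), dartVert_symm hm d (by omega)] at hsymm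
    convert hsymm.symm using 2 <;> omega
  rw [Subdiv, fromRel_adj]
  rcases x.eq_zero_or_pos with rfl | hx0
  · rw [dartVert_zero]
    rcases (Nat.succ_le_of_lt hm).eq_or_lt with rfl | hm1
    · rw [dartVert_self hm]
      exact ⟨by simp, Or.inl ⟨rfl, d.adj⟩⟩
    · rw [dartVert_of_lt hd (by omega) hm1]
      exact ⟨Sum.inl_ne_inr, Or.inl (Or.inl ⟨rfl, rfl⟩)⟩
  rw [dartVert_of_lt hd hx0 hx]
  rcases (Nat.succ_le_of_lt hx).eq_or_lt with rfl | hxm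
  · rw [dartVert_self hm]
    exact ⟨Sum.inr_ne_inl, Or.inr (Or.inr ⟨rfl, by simp only; omega⟩)⟩
  · rw [dartVert_of_lt hd (by omega) hxm]
    refine ⟨by simp; omega, Or.inl ⟨rfl, by simp only; omega⟩⟩

theorem subdiv_adj_iff (hm : 0 < m) {z z' : SubVert V G m} : (Subdiv G m).Adj z z' ↔
    ∃ d : G.Dart, ∃ x < m, z = dartVert m d x ∧ z' = dartVert m d (x + 1) := by
  constructor
  · rintro ⟨-, h | h⟩
    · exact exists_dart_of_subPre hm h
    · obtain ⟨d, x, hx, rfl, rfl⟩ := exists_dart_of_subPre hm h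
      refine ⟨d.symm, m - (x + 1), by omega, ?_, ?_⟩ <;>
      · rw [dartVert_symm hm d (by omega)]
        congr 1
        omega
  · rintro ⟨d, x, hx, rfl, rfl⟩
    exact dartVert_adj_succ hm d hx

theorem exists_eq_dartVert [Nontrivial V] (hG : G.Connected) (hm : 0 < m) (z : SubVert V G m) :
    ∃ d : G.Dart, ∃ x < m, z = dartVert m d x := by
  rcases z with v | ⟨⟨e, he, hlt⟩, i, hi⟩
  · obtain ⟨d, rfl⟩ := exists_dart_fst_eq hG v
    exact ⟨d, 0, hm, rfl⟩
  · let d : G.Dart := ⟨e, he⟩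
    refine ⟨d, i + 1, by omega, ?_⟩
    rw [dartVert_of_lt (d := d) hlt (by omega) (by omega)]
    rfl

theorem exists_walk_inl_dartVert (hm : 0 < m) (d : G.Dart) (hx : x ≤ m) :
    ∃ p : (Subdiv G m).Walk (Sum.inl d.fst) (dartVert m d x), p.length = x := by
  induction x with
  | zero => exact ⟨.nil, rfl⟩
  | succ x ih =>
    obtain ⟨p, hp⟩ := ih (by omega)
    exact ⟨p.concat (dartVert_adj_succ hm d hx), by rw [Walk.length_concat, hp]⟩

theorem exists_walk_inl_inl (hm : 0 < m) {u v : V} (p : G.Walk u v) :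
    ∃ q : (Subdiv G m).Walk (Sum.inl u) (Sum.inl v), q.length = m * p.length := by
  induction p with
  | nil => exact ⟨.nil, rfl⟩
  | @cons u v w h p ih =>
    obtain ⟨q, hq⟩ := ih
    let d : G.Dart := ⟨(u, v), h⟩
    obtain ⟨r, hr⟩ := exists_walk_inl_dartVert hm d le_rfl
    refine ⟨(r.copy rfl (dartVert_self hm d)).append q, ?_⟩
    rw [Walk.length_append, Walk.length_copy, hr, hq, Walk.length_cons]
    ring

theorem exists_walk_from_inl (hG : G.Connected) (hm : 0 < m) (w : V) (d : G.Dart) (hx : x ≤ m) :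
    ∃ p : (Subdiv G m).Walk (Sum.inl w) (dartVert m d x), p.length = m * G.dist w d.fst + x := by
  obtain ⟨p, hp⟩ := hG.exists_walk_length_eq_dist w d.fst
  obtain ⟨q, hq⟩ := exists_walk_inl_inl hm p
  obtain ⟨r, hr⟩ := exists_walk_inl_dartVert hm d hx
  exact ⟨q.append r, by rw [Walk.length_append, hq, hr, hp]⟩

/-- The value of the distance in `G^{1/m}` from the branch vertex `w`, defined on all vertices so
that it can be compared with the length of a walk. -/
noncomputable def branchDist (G : SimpleGraph V) (m : ℕ) (w : V) : SubVert V G m → ℕ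
  | Sum.inl v => m * G.dist w v
  | Sum.inr (e, i) =>
      min (m * G.dist w e.1.1 + (i + 1)) (m * G.dist w e.1.2 + (m - (i + 1)))

theorem branchDist_dartVert (hm : 0 < m) (w : V) (d : G.Dart) (hx : x ≤ m) :
    branchDist G m w (dartVert m d x) =
      min (m * G.dist w d.fst + x) (m * G.dist w d.snd + (m - x)) := by
  wlog hd : d.fst < d.snd generalizing d x
  · have hsymm := this d.symm (m.sub_le x) ((fst_lt_snd_or_symm d).resolve_left hd)
    rw [dartVert_symm hm d (m.sub_le x), Nat.sub_sub_self hx, min_comm] at hsymm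
    exact hsymm
  have hfst := Nat.mul_le_mul_left m (dist_le_dist_add_one w d.adj)
  have hsnd := Nat.mul_le_mul_left m (dist_le_dist_add_one w d.adj.symm)
  simp only [Nat.mul_add, Nat.mul_one] at hfst hsnd
  rcases x.eq_zero_or_pos with rfl | hx0
  · change m * G.dist w d.fst = _
    omega
  rcases hx.eq_or_lt with rfl | hxm
  · rw [dartVert_self hm]
    change x * G.dist w d.snd = _
    omega
  · rw [dartVert_of_lt hd hx0 hxm]
    change min (m * G.dist w d.fst + (x - 1 + 1)) (m * G.dist w d.snd + (m - (x - 1 + 1))) = _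
    rw [Nat.sub_add_cancel hx0]

theorem branchDist_le_of_adj (hm : 0 < m) (w : V) (z z' : SubVert V G m)
    (h : (Subdiv G m).Adj z z') : branchDist G m w z' ≤ branchDist G m w z + 1 := by
  obtain ⟨d, x, hx, rfl, rfl⟩ := (subdiv_adj_iff hm).1 h
  rw [branchDist_dartVert hm w d hx, branchDist_dartVert hm w d hx.le]
  omega

theorem dist_inl_dartVert (hG : G.Connected) (hm : 0 < m) (w : V) (d : G.Dart) (hx : x ≤ m) :
    (Subdiv G m).dist (Sum.inl w) (dartVert m d x) =
      min (m * G.dist w d.fst + x) (m * G.dist w d.snd + (m - x)) := by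
  obtain ⟨p, hp⟩ := exists_walk_from_inl hG hm w d hx
  obtain ⟨q, hq⟩ := exists_walk_from_inl hG hm w d.symm (m.sub_le x)
  have hend : dartVert m d.symm (m - x) = dartVert m d x := by
    rw [dartVert_symm hm d (m.sub_le x), Nat.sub_sub_self hx]
  refine le_antisymm (le_min ((dist_le p).trans_eq hp) ?_) ?_
  · exact (dist_le (q.copy rfl hend)).trans_eq (by rw [Walk.length_copy, hq]; rfl)
  · obtain ⟨r, hr⟩ := p.reachable.exists_walk_length_eq_dist
    have hle := le_add_length_of_lipschitz (branchDist_le_of_adj hm w) r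
    rw [branchDist_dartVert hm w d hx, hr] at hle
    have hself : branchDist G m w (Sum.inl w) = 0 := by simp [branchDist]
    omega

end Subdivision

section Darts

variable {V : Type*} {G : SimpleGraph V} {M y : ℕ}

/-- The darts starting in `C` whose edge lies in `E`. -/
def darts (G : SimpleGraph V) (C : Set V) (E : Set (Sym2 V)) : Set G.Dart :=
  {d | d.fst ∈ C ∧ d.edge ∈ E}

theorem darts_mono {C C' : Set V} {E E' : Set (Sym2 V)} (hC : C ⊆ C') (hE : E ⊆ E') :
    darts G C E ⊆ darts G C' E' :=
  fun _ hd => ⟨hC hd.1, hE hd.2⟩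

theorem dart_fst_mem_of_edge_mem_sym2 {U : Set V} {d : G.Dart} (h : d.edge ∈ U.sym2) :
    d.fst ∈ U :=
  (Set.mk_mem_sym2_iff.1 h).1

/-- The darts along which the robber can be after one move when it was at distance `y ≤ M` along a
dart in `D`, on threads of length `2 * M + 1`: it may change threads at a branch vertex, and reach
the half of its thread nearer to the other end from a middle vertex. -/
def nextDarts (M y : ℕ) (D : Set G.Dart) : Set G.Dart :=
  {d | d ∈ D ∨ (y = 0 ∧ ∃ d' ∈ D, d.fst = d'.fst) ∨ (y = M ∧ d.symm ∈ D)}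

theorem nextDarts_darts_subset {C : Set V} {E : Set (Sym2 V)}
    (hE : y = 0 → ∀ d : G.Dart, d.fst ∈ C → d.edge ∈ E)
    (hC : y = M → ∀ d : G.Dart, d.edge ∈ E → d.fst ∈ C) :
    nextDarts M y (darts G C E) ⊆ darts G C E := by
  rintro d (hd | ⟨hy, d', hd', hfst⟩ | ⟨hy, hd⟩)
  · exact hd
  · have hdC : d.fst ∈ C := hfst ▸ hd'.1
    exact ⟨hdC, hE hy d hdC⟩
  · have hdE : d.edge ∈ E := d.edge_symm ▸ hd.2
    exact ⟨hC hy d hdE, hdE⟩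

theorem exists_splitting_vertex {E : Set (Sym2 V)} (hE : E.Nonempty) :
    ∃ w, (∃ e ∈ E, w ∈ e) ∧ (E.Nontrivial → ∃ e ∈ E, w ∉ e) := by
  by_cases hE' : E.Nontrivial
  · obtain ⟨e, he, e', he', hne⟩ := hE'
    by_contra! h
    refine hne (Sym2.ext fun w => ⟨fun hw => ?_, fun hw => ?_⟩)
    · exact (h w ⟨e, he, hw⟩).2 e' he'
    · exact (h w ⟨e', he', hw⟩).2 e he
  · obtain ⟨e, he⟩ := hE
    exact ⟨_, ⟨e, he, e.out_fst_mem⟩, fun h => absurd h hE'⟩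

end Darts

section Strategy

variable {V : Type*} [LinearOrder V] {M y y' : ℕ} {G : SimpleGraph V}

/-- The answer to a probe of the branch vertex `w` of `G^{1/(2M+1)}` when the robber is at distance
`y` along the dart `d`. -/
noncomputable def branchReply (M : ℕ) (w : V) (d : G.Dart) (y : ℕ) : ℕ :=
  (Subdiv G (2 * M + 1)).dist (Sum.inl w) (dartVert (2 * M + 1) d y)

/-- One cop wins on `G^{1/(2M+1)}` when, after a probe, the robber is known to be in `X`. -/
abbrev OneCopWins (M : ℕ) (X : Set (SubVert V G (2 * M + 1))) : Prop :=
  CopsWinAfterProbe (Subdiv G (2 * M + 1)) 1 X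

/-- The vertices of `G^{1/(2M+1)}` at distance `y` from the start of some dart in `D` along its
thread. With `y ≤ M` every vertex is of this form, and `y` is its distance to the nearest branch
vertex. -/
def level (M : ℕ) (D : Set G.Dart) (y : ℕ) : Set (SubVert V G (2 * M + 1)) :=
  (fun d => dartVert (2 * M + 1) d y) '' D

theorem exists_eq_dartVert_of_le [Nontrivial V] (hG : G.Connected)
    (z : SubVert V G (2 * M + 1)) : ∃ d : G.Dart, ∃ y ≤ M, z = dartVert (2 * M + 1) d y := by
  obtain ⟨d, x, hx, rfl⟩ := exists_eq_dartVert hG (2 * M).succ_pos z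
  rcases le_or_gt x M with hxM | hxM
  · exact ⟨d, x, hxM, rfl⟩
  · refine ⟨d.symm, 2 * M + 1 - x, by omega, ?_⟩
    rw [dartVert_symm (2 * M).succ_pos d (Nat.sub_le _ _), Nat.sub_sub_self hx.le]

theorem branchReply_eq_min (hG : G.Connected) (w : V) (d : G.Dart) (hy : y ≤ M) :
    branchReply M w d y =
      min ((2 * M + 1) * G.dist w d.fst + y) ((2 * M + 1) * G.dist w d.snd + (2 * M + 1 - y)) :=
  dist_inl_dartVert hG (2 * M).succ_pos w d (by omega)

theorem branchReply_eq_add_or_add_eq (hG : G.Connected) (w : V) (d : G.Dart) (hy : y ≤ M) :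
    branchReply M w d y = (2 * M + 1) * G.dist w d.fst + y ∨
      branchReply M w d y + y = (2 * M + 1) * G.dist w d.fst := by
  rw [branchReply_eq_min hG w d hy]
  rcases (dist_le_dist_add_one w d.adj.symm).eq_or_lt with heq | hlt
  · rw [heq, Nat.mul_add_one]
    omega
  · have hmul := Nat.mul_le_mul_left (2 * M + 1) (Nat.le_of_lt_succ hlt)
    omega

-- The reply is congruent to `y` or `-y` modulo `2 * M + 1`.
theorem eq_and_dist_eq_of_branchReply_eq (hG : G.Connected) (w : V) {d d' : G.Dart}
    (hy : y ≤ M) (hy' : y' ≤ M) (h : branchReply M w d y = branchReply M w d' y') :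
    y = y' ∧ G.dist w d.fst = G.dist w d'.fst := by
  have hd := branchReply_eq_add_or_add_eq hG w d hy
  have hd' := branchReply_eq_add_or_add_eq hG w d' hy'
  rw [← h] at hd'
  rcases lt_trichotomy (G.dist w d.fst) (G.dist w d'.fst) with hlt | heq | hlt
  · have hmul := Nat.mul_le_mul_left (2 * M + 1) (Nat.succ_le_of_lt hlt)
    rw [Nat.mul_succ] at hmul
    omega
  · rw [heq] at hd
    exact ⟨by omega, heq⟩
  · have hmul := Nat.mul_le_mul_left (2 * M + 1) (Nat.succ_le_of_lt hlt)
    rw [Nat.mul_succ] at hmul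
    omega

theorem exists_dist_fst_eq_of_branchReply_eq (hG : G.Connected) (w : V) (hy : y ≤ M) (a : ℕ) :
    ∃ δ, ∀ d : G.Dart, branchReply M w d y = a → G.dist w d.fst = δ := by
  by_cases h : ∃ d : G.Dart, branchReply M w d y = a
  · obtain ⟨d, hd⟩ := h
    exact ⟨G.dist w d.fst, fun d' hd' =>
      (eq_and_dist_eq_of_branchReply_eq hG w hy hy (hd'.trans hd.symm)).2⟩
  · exact ⟨0, fun d hd => absurd ⟨d, hd⟩ h⟩

theorem branchReply_lt_iff_mem_edge (hG : G.Connected) (w : V) (d : G.Dart) (hy0 : 0 < y)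
    (hy : y ≤ M) : branchReply M w d y < 2 * M + 1 ↔ w ∈ d.edge := by
  have hzero (v : V) (x : ℕ) (hx : x < 2 * M + 1) :
      (2 * M + 1) * G.dist w v + x < 2 * M + 1 ↔ w = v := by
    rw [← hG.dist_eq_zero_iff]
    refine ⟨fun h => ?_, fun h => by rwa [h, Nat.mul_zero, Nat.zero_add]⟩
    by_contra hne
    have := Nat.le_mul_of_pos_right (2 * M + 1) (Nat.pos_of_ne_zero hne)
    omega
  rw [branchReply_eq_min hG w d hy, min_lt_iff, hzero _ _ (by omega), hzero _ _ (by omega)]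
  exact Sym2.mem_iff.symm

theorem eq_of_edge_eq_of_branchReply_eq (hG : G.Connected) {w : V} {d d' : G.Dart} (hy : y ≤ M)
    (hw : w ∈ d.edge) (hedge : d.edge = d'.edge)
    (h : branchReply M w d y = branchReply M w d' y) : d = d' := by
  rcases dart_edge_eq_iff d d' |>.1 hedge with rfl | rfl
  · rfl
  have hdist := (eq_and_dist_eq_of_branchReply_eq hG w hy hy h).2
  change G.dist w d'.snd = G.dist w d'.fst at hdist
  rw [hedge] at hw
  rcases Sym2.mem_iff.1 hw with rfl | rfl
  · rw [dist_self, hG.dist_eq_zero_iff] at hdist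
    exact absurd hdist.symm d'.fst_ne_snd.symm
  · rw [dist_self, eq_comm, hG.dist_eq_zero_iff] at hdist
    exact absurd hdist.symm d'.fst_ne_snd

theorem level_mono {D D' : Set G.Dart} (h : D ⊆ D') : level M D y ⊆ level M D' y :=
  Set.image_mono h

theorem level_darts_zero_subset (C : Set V) (E : Set (Sym2 V)) :
    level M (darts G C E) 0 ⊆ Sum.inl '' C := by
  rintro _ ⟨d, hd, rfl⟩
  exact ⟨d.fst, hd.1, rfl⟩

theorem exists_mem_level_of_mem_closedNbhd (hM : 0 < M) (hy : y ≤ M) {D : Set G.Dart}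
    {z : SubVert V G (2 * M + 1)}
    (hz : z ∈ closedNbhd (Subdiv G (2 * M + 1)) (level M D y)) :
    ∃ y' ≤ M, y ≤ y' + 1 ∧ z ∈ level M (nextDarts M y D) y' := by
  obtain ⟨_, ⟨d, hd, rfl⟩, rfl | hadj⟩ := hz
  · exact ⟨y, hy, by omega, d, Or.inl hd, rfl⟩
  obtain ⟨d', x, hx, hd', rfl⟩ := (subdiv_adj_iff (2 * M).succ_pos).1 hadj
  rcases y.eq_zero_or_pos with rfl | hy0
  · obtain rfl : x = 0 := by
      by_contra hx0
      exact dartVert_ne_inl d' (Nat.pos_of_ne_zero hx0) hx d.fst hd'.symm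
    have hfst : d'.fst = d.fst := (Sum.inl_injective hd').symm
    exact ⟨1, hM, by omega, d', Or.inr (Or.inl ⟨rfl, d, hd, hfst⟩), rfl⟩
  rcases eq_or_eq_symm_of_dartVert_eq hy0 (by omega) hx hd' with ⟨rfl, rfl⟩ | ⟨rfl, hxy⟩
  · rcases hy.eq_or_lt with rfl | hyM
    · refine ⟨y, le_rfl, by omega, d.symm, Or.inr (Or.inr ⟨rfl, hd⟩), ?_⟩
      refine (dartVert_symm (2 * y).succ_pos d (by omega)).trans ?_
      congr 1
      omega
    · exact ⟨y + 1, hyM, by omega, d, Or.inl hd, rfl⟩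
  · refine ⟨y - 1, by omega, by omega, d'.symm, Or.inl hd, ?_⟩
    refine (dartVert_symm (2 * M).succ_pos d' (by omega)).trans ?_
    congr 1
    omega

theorem copsWin_of_probe_inl [Nontrivial V] (hG : G.Connected) (w : V)
    {S : Set (SubVert V G (2 * M + 1))}
    (H : ∀ y ≤ M, ∀ a, OneCopWins M (S ∩ level M {d | branchReply M w d y = a} y)) :
    CopsWin (Subdiv G (2 * M + 1)) 1 S := by
  refine .probe S (fun _ => Sum.inl w) fun a ha => ?_
  obtain ⟨z, hz⟩ := (Set.not_subsingleton_iff.1 ha).nonempty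
  obtain ⟨d, y, hy, rfl⟩ := exists_eq_dartVert_of_le hG z
  refine (H y hy (a 0)).mono ?_ ha
  intro z' hz'
  obtain ⟨d', y', hy', rfl⟩ := exists_eq_dartVert_of_le hG z'
  have hd' := congrFun hz'.2 0
  obtain ⟨rfl, -⟩ := eq_and_dist_eq_of_branchReply_eq hG w hy' hy
    (hd'.trans (congrFun hz.2 0).symm)
  exact ⟨hz'.1, d', hd', rfl⟩

theorem oneCopWins_level_of_probe_inl [Nontrivial V] (hG : G.Connected) (hM : 0 < M) (w : V)
    (hy : y ≤ M) {D : Set G.Dart} (hD : nextDarts M y D ⊆ D)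
    (H : ∀ y' ≤ M, y ≤ y' + 1 → ∀ a,
      OneCopWins M (level M {d ∈ D | branchReply M w d y' = a} y')) :
    OneCopWins M (level M D y) := by
  refine fun _ => copsWin_of_probe_inl hG w fun y' hy' a hX => ?_
  have hnext : ∀ z ∈ closedNbhd (Subdiv G (2 * M + 1)) (level M D y) ∩
      level M {d | branchReply M w d y' = a} y',
      y ≤ y' + 1 ∧ z ∈ level M {d ∈ D | branchReply M w d y' = a} y' := by
    rintro _ ⟨hz, d, hd, rfl⟩
    obtain ⟨y₁, hy₁, hyy₁, d₁, hd₁, heq⟩ := exists_mem_level_of_mem_closedNbhd hM hy hz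
    have hreply : branchReply M w d₁ y₁ = branchReply M w d y' :=
      congrArg ((Subdiv G (2 * M + 1)).dist (Sum.inl w)) heq
    obtain ⟨rfl, -⟩ := eq_and_dist_eq_of_branchReply_eq hG w hy₁ hy' hreply
    exact ⟨hyy₁, d₁, ⟨hD hd₁, hreply.trans hd⟩, heq⟩
  obtain ⟨z, hz⟩ := (Set.not_subsingleton_iff.1 hX).nonempty
  exact (H y' hy' (hnext z hz).1 a).mono (fun z hz => (hnext z hz).2) hX

/-- The probes at `L` suffice for `U`: once the distances in `G` from the vertices in `L` to the
nearest branch vertex are known, one cop wins against a robber that visits it within `U`. -/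
def Ready (G : SimpleGraph V) (M : ℕ) (L : List V) (U : Set V) : Prop :=
  ∀ C ⊆ U, (∀ w ∈ L, ∀ c ∈ C, ∀ c' ∈ C, G.dist w c = G.dist w c') →
    OneCopWins (G := G) M (Sum.inl '' C)

theorem Ready.anti {L : List V} {C U : Set V} (h : Ready G M L U) (hCU : C ⊆ U) :
    Ready G M L C :=
  fun C' hC' => h C' (hC'.trans hCU)

theorem Ready.oneCopWins {U : Set V} (h : Ready G M [] U) :
    OneCopWins (G := G) M (Sum.inl '' U) :=
  h U subset_rfl fun _ hw => absurd hw List.not_mem_nil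

theorem Ready.of_cons {w : V} {L : List V} {C : Set V} (h : Ready G M (w :: L) C) (δ : ℕ) :
    Ready G M L {c ∈ C | G.dist w c = δ} := by
  refine fun C' hC' hL => h C' (fun c hc => (hC' hc).1) ?_
  simp only [List.forall_mem_cons]
  exact ⟨fun c hc c' hc' => (hC' hc).2.trans (hC' hc').2.symm, hL⟩

/-- One cop wins against a robber known, after a probe, to be inside a thread replacing an edge in
`E`: in the half of the thread near a vertex of `C`, provided that the cop would win if the robber
visited `C`, and unconditionally in the middle of the thread. -/
structure ThreadsWin (G : SimpleGraph V) (M : ℕ) (E : Set (Sym2 V)) : Prop where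
  interior {C : Set V} (hC : OneCopWins (G := G) M (Sum.inl '' C)) {y : ℕ} (hy0 : 0 < y)
    (hy : y < M) : OneCopWins M (level M (darts G C E) y)
  middle : OneCopWins M (level M (darts G Set.univ E) M)

variable [Nontrivial V] {L : List V} {C U : Set V} {E : Set (Sym2 V)}

-- The vertices in `L` are probed one by one; meanwhile the robber cannot change threads, since it
-- is still `y` moves away from the next branch vertex.
theorem ThreadsWin.oneCopWins_of_ready (hG : G.Connected) (hE : ThreadsWin G M E)
    (hC : Ready G M L C) (hy : y < M)
    (hCE : y < L.length → ∀ d : G.Dart, d.fst ∈ C → d.edge ∈ E) :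
    OneCopWins M (level M (darts G C E) y) := by
  induction L generalizing C y with
  | nil =>
    rcases y.eq_zero_or_pos with rfl | hy0
    · exact hC.oneCopWins.mono (level_darts_zero_subset C E)
    · exact hE.interior hC.oneCopWins hy0 hy
  | cons w L ih =>
    have hnext : nextDarts M y (darts G C E) ⊆ darts G C E :=
      nextDarts_darts_subset (fun h => hCE (h ▸ Nat.succ_pos _)) fun h => absurd h hy.ne
    refine oneCopWins_level_of_probe_inl hG (by omega) w hy.le hnext fun y' hy' hyy' a => ?_
    rcases hy'.eq_or_lt with rfl | hy'M
    · exact hE.middle.mono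
        (level_mono fun d hd => darts_mono (Set.subset_univ C) subset_rfl hd.1)
    · obtain ⟨δ, hδ⟩ := exists_dist_fst_eq_of_branchReply_eq hG w hy' a
      refine (ih (hC.of_cons δ) hy'M fun hlen d hd => ?_).mono
        (level_mono fun d hd => ⟨⟨hd.1.1, hδ d hd.2⟩, hd.1.2⟩)
      exact hCE (hyy'.trans_lt (Nat.succ_lt_succ hlen)) d hd.1

theorem oneCopWins_level_of_forall_ssubset (hG : G.Connected) (hy0 : 0 < y) (hy : y ≤ M)
    (hEC : y = M → ∀ d : G.Dart, d.edge ∈ E → d.fst ∈ C)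
    (hC : y ≤ 1 → OneCopWins (G := G) M (Sum.inl '' C))
    (hE : ∀ E' ⊂ E, ∀ y', 0 < y' → y' ≤ M → y ≤ y' + 1 →
      OneCopWins M (level M (darts G C E') y')) :
    OneCopWins M (level M (darts G C E) y) := by
  rcases E.eq_empty_or_nonempty with rfl | hne
  · refine copsWinAfterProbe_of_subsingleton ?_
    rintro _ ⟨d, hd, -⟩
    exact hd.2.elim
  obtain ⟨w, ⟨e, he, hwe⟩, hsplit⟩ := exists_splitting_vertex hne
  have hnext : nextDarts M y (darts G C E) ⊆ darts G C E :=
    nextDarts_darts_subset (fun h => absurd h hy0.ne') hEC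
  refine oneCopWins_level_of_probe_inl hG (by omega) w hy hnext fun y' hy' hyy' a => ?_
  rcases y'.eq_zero_or_pos with rfl | hy'0
  · exact (hC hyy').mono ((level_mono fun d hd => hd.1).trans (level_darts_zero_subset C E))
  have hmem (d : G.Dart) (hd : branchReply M w d y' = a) : w ∈ d.edge ↔ a < 2 * M + 1 := by
    rw [← hd, branchReply_lt_iff_mem_edge hG w d hy'0 hy']
  rcases lt_or_ge a (2 * M + 1) with ha | ha
  · rcases E.subsingleton_or_nontrivial with hsub | hnt
    · refine copsWinAfterProbe_of_subsingleton (Set.Subsingleton.image ?_ _)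
      intro d hd d' hd'
      exact eq_of_edge_eq_of_branchReply_eq hG hy' ((hmem d hd.2).2 ha)
        (hsub hd.1.2 hd'.1.2) (hd.2.trans hd'.2.symm)
    · obtain ⟨e', he', hwe'⟩ := hsplit hnt
      have hlt : {e ∈ E | w ∈ e} ⊂ E :=
        (Set.sep_subset _ _).ssubset_of_mem_notMem he' fun h => hwe' h.2
      exact (hE _ hlt y' hy'0 hy' hyy').mono
        (level_mono fun d hd => ⟨hd.1.1, hd.1.2, (hmem d hd.2).2 ha⟩)
  · have hlt : {e ∈ E | w ∉ e} ⊂ E :=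
      (Set.sep_subset _ _).ssubset_of_mem_notMem he fun h => h.2 hwe
    exact (hE _ hlt y' hy'0 hy' hyy').mono
      (level_mono fun d hd => ⟨hd.1.1, hd.1.2, fun h => ha.not_gt ((hmem d hd.2).1 h)⟩)

theorem Ready.threadsWin [Finite V] (hG : G.Connected) (hU : Ready G M L U) (hL : L.length < M)
    (hEU : E ⊆ U.sym2) : ThreadsWin G M E := by
  induction E using WellFoundedLT.induction with
  | ind E ih =>
    replace ih (E') (hE' : E' ⊂ E) : ThreadsWin G M E' := ih E' hE' (hE'.subset.trans hEU)
    have hmiddle (E') (hE' : E' ⊂ E) (C : Set V) : OneCopWins M (level M (darts G C E') M) :=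
      (ih E' hE').middle.mono (level_mono (darts_mono (Set.subset_univ C) subset_rfl))
    refine ⟨fun {C} hC y hy0 hy => ?_, ?_⟩
    · refine oneCopWins_level_of_forall_ssubset hG hy0 hy.le (fun h => absurd h hy.ne)
        (fun _ => hC) fun E' hE' y' hy'0 hy' _ => ?_
      rcases hy'.eq_or_lt with rfl | hy'M
      · exact hmiddle E' hE' C
      · exact (ih E' hE').interior hC hy'0 hy'M
    · suffices hUE : OneCopWins M (level M (darts G U E) M) from
        hUE.mono (level_mono fun d hd => ⟨dart_fst_mem_of_edge_mem_sym2 (hEU hd.2), hd.2⟩)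
      refine oneCopWins_level_of_forall_ssubset hG (by omega) le_rfl
        (fun _ d hd => dart_fst_mem_of_edge_mem_sym2 (hEU hd)) (fun hM => ?_)
        fun E' hE' y' _ hy' hyy' => ?_
      · obtain rfl : L = [] := List.eq_nil_of_length_eq_zero (by omega)
        exact hU.oneCopWins
      · rcases hy'.eq_or_lt with rfl | hy'M
        · exact hmiddle E' hE' U
        · exact (ih E' hE').oneCopWins_of_ready hG hU hy'M fun h => by omega

theorem Ready.oneCopWins_image_inl [Finite V] (hG : G.Connected) (hU : Ready G M L U)
    (hL : L.length < M) (hCU : closedNbhd G C ⊆ U) :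
    OneCopWins (G := G) M (Sum.inl '' C) := by
  have hCU' : C ⊆ U := (subset_closedNbhd C).trans hCU
  have hedge (d : G.Dart) (hd : d.fst ∈ C) : d.edge ∈ U.sym2 :=
    Set.mk_mem_sym2_iff.2 ⟨hCU' hd, hCU ⟨d.fst, hd, Or.inr d.adj⟩⟩
  refine ((hU.threadsWin hG hL subset_rfl).oneCopWins_of_ready (y := 0) hG (hU.anti hCU')
    (by omega) fun _ => hedge).mono ?_
  rintro _ ⟨c, hc, rfl⟩
  obtain ⟨d, rfl⟩ := exists_dart_fst_eq hG c
  exact ⟨d, ⟨hc, hedge d hc⟩, rfl⟩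

theorem CopsWin.exists_ready [Finite V] {k : ℕ} (hG : G.Connected) (h : CopsWin G k U)
    (hk : k < M) : ∃ L : List V, L.length = k ∧ Ready G M L U := by
  induction h with
  | probe U p _ ih =>
    refine ⟨List.ofFn p, List.length_ofFn, fun C hCU hC => ?_⟩
    rcases C.subsingleton_or_nontrivial with hsub | hnt
    · exact copsWinAfterProbe_of_subsingleton (hsub.image _)
    obtain ⟨c, hc⟩ := hnt.nonempty
    have hcons : C ⊆ consistent G U p (probeAnswer G p c) := fun c' hc' =>
      ⟨hCU hc', funext fun i => hC (p i) (List.mem_ofFn.2 ⟨i, rfl⟩) c' hc' c hc⟩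
    obtain ⟨L, hLk, hL⟩ := ih _ (hnt.mono hcons).not_subsingleton
    exact (hL.oneCopWins_image_inl hG (hLk ▸ hk) subset_rfl).mono (Set.image_mono hcons)

theorem CopsWin.subdiv [Finite V] {k : ℕ} (hG : G.Connected) (h : CopsWin G k Set.univ)
    (hk : k < M) : CopsWin (Subdiv G (2 * M + 1)) 1 Set.univ := by
  obtain ⟨L, rfl, hL⟩ := h.exists_ready hG hk
  have hthreads : ThreadsWin G M Set.univ := hL.threadsWin hG hk Set.sym2_univ.superset
  have hbranch : OneCopWins (G := G) M (Sum.inl '' Set.univ) :=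
    hL.oneCopWins_image_inl hG hk (Set.subset_univ _)
  obtain ⟨w⟩ := hG.nonempty
  have hlevel (D : Set G.Dart) (y : ℕ) :
      Set.univ ∩ level M D y ⊆ level M (darts G Set.univ Set.univ) y := by
    rw [Set.univ_inter]
    exact level_mono fun d _ => ⟨trivial, trivial⟩
  refine copsWin_of_probe_inl hG w fun y hy a => .mono ?_ (hlevel _ y)
  rcases y.eq_zero_or_pos with rfl | hy0
  · exact hbranch.mono (level_darts_zero_subset _ _)
  rcases hy.eq_or_lt with rfl | hyM
  · exact hthreads.middle
  · exact hthreads.interior hbranch hy0 hyM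

end Strategy

theorem subdivNum_le_const_mul_locNum_general {V : Type*} [LinearOrder V] [Finite V] [Nontrivial V]
    {G : SimpleGraph V} (hG : G.Connected) : subdivNum G ≤ 2 * locNum G + 3 :=
  Nat.sInf_le ⟨by omega,
    ((localizable_locNum hG).copsWin.subdiv hG (locNum G).lt_succ_self).localizable⟩

/-- There is an absolute constant `C > 0` such that for every finite connected
graph `G` with at least two vertices, `η(G) ≤ C · ζ(G)`. -/
theorem subdivNum_le_const_mul_locNum :
    ∃ C : ℕ, 0 < C ∧ ∀ (n : ℕ) (G : SimpleGraph (Fin n)),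
      G.Connected → 2 ≤ n → subdivNum G ≤ C * locNum G := by
  refine ⟨5, by omega, fun n G hG hn => ?_⟩
  have _ : Nontrivial (Fin n) := Fin.nontrivial_iff_two_le.2 hn
  have hle := subdivNum_le_const_mul_locNum_general hG
  have hpos := locNum_pos hG
  omega
end

section
/- For every integer m ≥ 3 there exists a finite connected graph G such that η(G) = m and ζ(G) = 2^{m−1}. In particular, ζ is not bounded above by any function that is O(η). -/
open SimpleGraph

/-
Take a bipartite graph `D` with parts `U` and `B` in which some `b₀ ∈ B` is adjacent to all of `U`
and a large set `F ⊆ U` of twins is adjacent to all of `B`.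

One cop on `D^{1/m}`: probing a vertex of `U` reveals how far the robber has climbed from `U` to `B`
and one bit about the right end of his thread. If `m - 1` such bits always determine the right end,
up to the hub `b₀` that a probe next to `U` excludes, then the robber is caught on reaching `B`, and
each time he turns back to `U` the cop has removed one vertex from the set of his possible left
ends. On `D^{1/j}` with `2 ^ j < |B|`, in contrast, every probe leaves at least half of the possible
right ends indistinguishable during a climb, and all but one of `F` during a descent, so that the
robber escapes. On `D` itself the best the cops can do is to probe a set that resolves `B` together
with each vertex of `U` in turn, so that `ζ(D)` is the least size of a resolving set plus one.

It remains to make resolving sets large. Let `B` consist of three copies of each vertex of the cube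
of dimension `m - 2`: then `m - 2` bits single out a triple, one more probe inside its threads
separates it, and `|B| > 2 ^ (m - 1)`, but a resolving set needs two elements for every triple
except that of `b₀`, where one suffices. This needs `m ≥ 4`; for `m = 3` the square with an extra
hub serves as `B`.
-/

namespace LocatingGame

section Game

variable {V : Type*} {G : SimpleGraph V} {k : ℕ}

/-- The positions a robber can reach by one move from a position in `S`, staying put included. -/
def closedNbhd (G : SimpleGraph V) (S : Set V) : Set V :=
  {w | ∃ v ∈ S, w = v ∨ G.Adj v w}

/-- The candidates in `S` that answer the probe `p` with the distances `α`. -/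
def answerClass (G : SimpleGraph V) (p : Fin k → V) (S : Set V) (α : Fin k → ℕ) : Set V :=
  {v ∈ S | ∀ i, G.dist (p i) v = α i}

/-- The cops can locate a robber who is known to be in `S` when they are about to probe. -/
inductive CopWins (G : SimpleGraph V) (k : ℕ) : Set V → Prop
  | probe (S : Set V) (p : Fin k → V)
      (h : ∀ α, ¬(answerClass G p S α).Subsingleton →
        CopWins G k (closedNbhd G (answerClass G p S α))) : CopWins G k S

/-- The cops can locate a robber whose position just after a probe is known to be in `S`. -/
def CopWinsAfter (G : SimpleGraph V) (k : ℕ) (S : Set V) : Prop :=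
  ¬S.Subsingleton → CopWins G k (closedNbhd G S)

theorem closedNbhd_mono {S T : Set V} (h : S ⊆ T) : closedNbhd G S ⊆ closedNbhd G T :=
  fun _ ⟨v, hv, hw⟩ => ⟨v, h hv, hw⟩

theorem answerClass_mono (p : Fin k → V) (α : Fin k → ℕ) {S T : Set V} (h : S ⊆ T) :
    answerClass G p S α ⊆ answerClass G p T α :=
  fun _ hv => ⟨h hv.1, hv.2⟩

theorem CopWins.mono {S T : Set V} (hT : CopWins G k T) (h : S ⊆ T) : CopWins G k S := by
  induction hT generalizing S with
  | probe T p _ ih =>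
    refine .probe S p fun α hα => ?_
    have hsub := answerClass_mono (G := G) p α h
    exact ih α (fun hs => hα (hs.anti hsub)) (closedNbhd_mono hsub)

theorem CopWinsAfter.mono {S T : Set V} (hT : CopWinsAfter G k T) (h : S ⊆ T) :
    CopWinsAfter G k S :=
  fun hS => (hT fun hs => hS (hs.anti h)).mono (closedNbhd_mono h)

theorem copWinsAfter_of_subsingleton {S : Set V} (h : S.Subsingleton) : CopWinsAfter G k S :=
  fun hS => absurd h hS

theorem CopWins.of_probe {S : Set V} (p : Fin k → V)
    (h : ∀ w ∈ S, ∃ K, CopWinsAfter G k K ∧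
      ∀ v ∈ S, (∀ i, G.dist (p i) v = G.dist (p i) w) → v ∈ K) : CopWins G k S := by
  refine .probe S p fun α hα => ?_
  obtain ⟨w, hwS, hw⟩ := (Set.not_subsingleton_iff.mp hα).nonempty
  obtain ⟨K, hK, hKS⟩ := h w hwS
  exact hK.mono (fun v hv => hKS v hv.1 fun i => (hv.2 i).trans (hw i).symm) hα

theorem probeHist_succ_eq_cons (A : CopStrategy V k) (r : ℕ → V) (t : ℕ) :
    probeHist G A r (t + 1) = (fun i => G.dist (A [] i) (r 0)) ::
      probeHist G (fun l => A ((fun i => G.dist (A [] i) (r 0)) :: l)) (fun s => r (s + 1)) t := by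
  induction t with
  | zero => rfl
  | succ t ih =>
    rw [probeHist, ih]
    rfl

/-- The strategy `A` locates every robber who is known to start in `S`. -/
def WinsFrom (G : SimpleGraph V) (A : CopStrategy V k) (S : Set V) : Prop :=
  ∀ r, ValidTraj G r → r 0 ∈ S → ∃ t, ∀ r', ValidTraj G r' → r' 0 ∈ S →
    probeHist G A r' (t + 1) = probeHist G A r (t + 1) → r' t = r t

theorem WinsFrom.of_probe {S : Set V} {p : Fin k → V} {A : (Fin k → ℕ) → CopStrategy V k}
    (hA : ∀ α, ¬(answerClass G p S α).Subsingleton →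
      WinsFrom G (A α) (closedNbhd G (answerClass G p S α))) :
    WinsFrom G (fun | [] => p | α :: l => A α l) S := by
  intro r hr hr0
  have hhist (q : ℕ → V) (t : ℕ) :
      probeHist G (fun | [] => p | α :: l => A α l) q (t + 1) =
        (fun i => G.dist (p i) (q 0)) ::
          probeHist G (A fun i => G.dist (p i) (q 0)) (fun s => q (s + 1)) t :=
    probeHist_succ_eq_cons _ q t
  by_cases hs : (answerClass G p S fun i => G.dist (p i) (r 0)).Subsingleton
  · refine ⟨0, fun r' _ hr'0 he => ?_⟩
    rw [hhist, hhist] at he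
    exact hs ⟨hr'0, congrFun (List.cons.inj he).1⟩ ⟨hr0, fun _ => rfl⟩
  · obtain ⟨t, ht⟩ := hA _ hs (fun s => r (s + 1)) (fun s => hr (s + 1))
      ⟨r 0, ⟨hr0, fun _ => rfl⟩, hr 0⟩
    refine ⟨t + 1, fun r' hr' hr'0 he => ?_⟩
    rw [hhist, hhist] at he
    obtain ⟨hfirst, hrest⟩ := List.cons.inj he
    rw [hfirst] at hrest
    exact ht (fun s => r' (s + 1)) (fun s => hr' (s + 1))
      ⟨r' 0, ⟨hr'0, congrFun hfirst⟩, hr' 0⟩ hrest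

theorem CopWins.exists_winsFrom {S : Set V} (h : CopWins G k S) :
    ∃ A : CopStrategy V k, WinsFrom G A S := by
  induction h with
  | probe S p _ ih =>
    have hstrategy (α : Fin k → ℕ) : ∃ A : CopStrategy V k,
        ¬(answerClass G p S α).Subsingleton →
          WinsFrom G A (closedNbhd G (answerClass G p S α)) := by
      by_cases hs : (answerClass G p S α).Subsingleton
      · exact ⟨fun _ => p, absurd hs⟩
      · exact (ih α hs).imp fun _ hA _ => hA
    choose A hA using hstrategy
    exact ⟨_, WinsFrom.of_probe hA⟩

theorem CopWins.localizable (h : CopWins G k Set.univ) : Localizable G k := by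
  obtain ⟨A, hA⟩ := h.exists_winsFrom
  refine ⟨A, fun r hr => (hA r hr (Set.mem_univ _)).imp fun t ht => ?_⟩
  refine Set.eq_singleton_iff_unique_mem.mpr ⟨⟨r, hr, rfl, rfl⟩, ?_⟩
  rintro _ ⟨r', hr', he, rfl⟩
  exact ht r' hr' (Set.mem_univ _) he

theorem locNum_eq_zero_of_subsingleton [Subsingleton V] (G : SimpleGraph V) : locNum G = 0 :=
  Nat.sInf_eq_zero.mpr <| .inl
    (CopWins.probe _ Fin.elim0 fun _ h => absurd Set.subsingleton_of_subsingleton h).localizable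

end Game

section Evasion

variable {V : Type*} {G : SimpleGraph V} {k : ℕ}

theorem exists_forall_rel_of_forall_exists_lt [Finite V] (R : ℕ → V → V → Prop)
    (h : ∀ n, ∃ f : ℕ → V, ∀ i < n, R i (f i) (f (i + 1))) :
    ∃ f : ℕ → V, ∀ i, R i (f i) (f (i + 1)) := by
  let : TopologicalSpace V := ⊥
  have : DiscreteTopology V := ⟨rfl⟩
  let K (n : ℕ) : Set (ℕ → V) := ⋂ i < n, {f | R i (f i) (f (i + 1))}
  have hK (n : ℕ) : IsClosed (K n) := isClosed_biInter fun i _ =>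
    (isClosed_discrete {q : V × V | R i q.1 q.2}).preimage
      (f := fun f : ℕ → V => (f i, f (i + 1))) (by fun_prop)
  obtain ⟨f, hf⟩ := IsCompact.nonempty_iInter_of_sequence_nonempty_isCompact_isClosed K
    (fun n => Set.biInter_subset_biInter_left fun _ => Nat.lt_succ_of_lt)
    (fun n => (h n).imp fun f hf => Set.mem_iInter₂.mpr hf) (hK 0).isCompact hK
  exact ⟨f, fun i => Set.mem_iInter₂.mp (Set.mem_iInter.mp hf (i + 1)) i i.lt_succ_self⟩

theorem exists_validTraj_of_mem {S : ℕ → Set V} (hS : ∀ t, S (t + 1) ⊆ closedNbhd G (S t))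
    {t : ℕ} {w : V} (hw : w ∈ S t) :
    ∃ r, ValidTraj G r ∧ (∀ s ≤ t, r s ∈ S s) ∧ r t = w := by
  induction t generalizing w with
  | zero => exact ⟨fun _ => w, fun _ => .inl rfl, fun s hs => by rwa [Nat.le_zero.mp hs], rfl⟩
  | succ t ih =>
    obtain ⟨v, hv, hvw⟩ := hS t hw
    obtain ⟨r, hr, hrS, rfl⟩ := ih hv
    refine ⟨fun s => if s ≤ t then r s else w, fun s => ?_, fun s hs => ?_, if_neg (by omega)⟩
    · rcases lt_trichotomy s t with hst | rfl | hst
      · simpa only [hst.le, Nat.succ_le_of_lt hst, if_true] using hr s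
      · simpa using hvw
      · simp [hst.not_ge, (Nat.lt_succ_of_lt hst).not_ge]
    · rcases Nat.le_succ_iff.mp hs with hst | rfl
      · simpa only [hst, if_true] using hrS s hst
      · simpa using hw

theorem exists_validTraj_forall_mem [Finite V] {S : ℕ → Set V} (hne : ∀ t, (S t).Nonempty)
    (hS : ∀ t, S (t + 1) ⊆ closedNbhd G (S t)) : ∃ r, ValidTraj G r ∧ ∀ t, r t ∈ S t := by
  obtain ⟨r, hr⟩ := exists_forall_rel_of_forall_exists_lt
    (fun t v w => v ∈ S t ∧ (w = v ∨ G.Adj v w)) fun n => by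
      obtain ⟨w, hw⟩ := hne n
      obtain ⟨r, hr, hrS, -⟩ := exists_validTraj_of_mem hS hw
      exact ⟨r, fun i hi => ⟨hrS i hi.le, hr i⟩⟩
  exact ⟨r, fun t => (hr t).2, fun t => (hr t).1⟩

/-- No probe of `p` tells two vertices of `S` apart. -/
def ProbeBlind (G : SimpleGraph V) (p : Fin k → V) (S : Set V) : Prop :=
  ∀ i, ∀ v ∈ S, ∀ w ∈ S, G.dist (p i) v = G.dist (p i) w

theorem probeBlind_pair {p : Fin k → V} {v w : V} (h : ∀ i, G.dist (p i) v = G.dist (p i) w) :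
    ProbeBlind G p {v, w} := by
  rintro i _ (rfl | rfl) _ (rfl | rfl)
  exacts [rfl, h i, (h i).symm, rfl]

/-- A family of candidate sets that a robber can maintain forever against `k` cops: whatever the
cops probe, the robber can be in some member that the probe does not cut. -/
structure IsEvasive (G : SimpleGraph V) (k : ℕ) (F : Set (Set V)) : Prop where
  nontrivial : ∀ S ∈ F, S.Nontrivial
  exists_start : ∀ p : Fin k → V, ∃ S ∈ F, ProbeBlind G p S
  exists_next : ∀ S ∈ F, ∀ p : Fin k → V, ∃ T ∈ F, T ⊆ closedNbhd G S ∧ ProbeBlind G p T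

theorem IsEvasive.exists_seq {F : Set (Set V)} (hF : IsEvasive G k F) (A : CopStrategy V k) :
    ∃ (S : ℕ → Set V) (l : ℕ → List (Fin k → ℕ)),
      (∀ t, S t ∈ F) ∧ (∀ t, S (t + 1) ⊆ closedNbhd G (S t)) ∧
        ∀ r t, (∀ s < t, r s ∈ S s) → probeHist G A r t = l t := by
  choose S₀ hS₀F hS₀ using hF.exists_start
  choose S₁ hS₁F hS₁sub hS₁ using fun S : F => hF.exists_next S.1 S.2
  choose v hv using fun S : F => (hF.nontrivial S.1 S.2).nonempty
  let extend (s : F × List (Fin k → ℕ)) : List (Fin k → ℕ) :=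
    s.2 ++ [fun i => G.dist (A s.2 i) (v s.1)]
  let state (t : ℕ) : F × List (Fin k → ℕ) :=
    t.rec (⟨S₀ (A []), hS₀F _⟩, [])
      fun _ s => (⟨S₁ s.1 (A (extend s)), hS₁F _ _⟩, extend s)
  have hblind (t : ℕ) : ProbeBlind G (A (state t).2) (state t).1 := by
    cases t with
    | zero => exact hS₀ _
    | succ t => exact hS₁ _ _
  refine ⟨fun t => (state t).1, fun t => (state t).2, fun t => (state t).1.2,
    fun t => hS₁sub _ _, fun r t => ?_⟩
  induction t with
  | zero => exact fun _ => rfl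
  | succ t ih =>
    intro h
    rw [probeHist, ih fun s hs => h s (hs.trans t.lt_succ_self)]
    exact congrArg (fun α => (state t).2 ++ [α])
      (funext fun i => hblind t i _ (h t t.lt_succ_self) _ (hv _))

theorem IsEvasive.not_localizable [Finite V] {F : Set (Set V)} (hF : IsEvasive G k F) :
    ¬Localizable G k := by
  rintro ⟨A, hA⟩
  obtain ⟨S, l, hSF, hS, hl⟩ := hF.exists_seq A
  obtain ⟨r, hr, hrS⟩ :=
    exists_validTraj_forall_mem (fun t => (hF.nontrivial _ (hSF t)).nonempty) hS
  obtain ⟨t, ht⟩ := hA r hr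
  obtain ⟨w, hw, hne⟩ := (hF.nontrivial _ (hSF t)).exists_ne (r t)
  obtain ⟨r', hr', hr'S, rfl⟩ := exists_validTraj_of_mem hS hw
  have hmem : r' t ∈ RSet G A r t := by
    refine ⟨r', hr', ?_, rfl⟩
    rw [hl r' _ fun s hs => hr'S s (Nat.le_of_lt_succ hs), hl r _ fun s _ => hrS s]
  rw [ht] at hmem
  exact hne hmem

end Evasion

/-- A bipartite graph with parts `U` and `B`, given by its incidence relation, in which some vertex
of each part (the hubs `b₀` and `u₀`) is adjacent to the whole other part. -/
structure HubBigraph (U B : Type*) where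
  Rel : U → B → Prop
  b₀ : B
  rel_b₀ : ∀ u, Rel u b₀
  u₀ : U
  rel_u₀ : ∀ b, Rel u₀ b

variable {U B P : Type*} {D : HubBigraph U B} {H : SimpleGraph P} {m : ℕ}

/-- `H` is the graph `D` with its edges replaced by threads of length `m`; `pt u b x` is the point
of the thread from `u` to `b` at distance `x` from `u`, with junk values when `Rel u b` or `x ≤ m`
fails. For `m = 1` this says that `H` is `D` itself. -/
structure SubdivModel (D : HubBigraph U B) (H : SimpleGraph P) (m : ℕ) where
  pos : 0 < m
  pt : U → B → ℕ → P
  exists_eq_pt : ∀ p, ∃ u b x, D.Rel u b ∧ x ≤ m ∧ p = pt u b x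
  adj_iff : ∀ p q, H.Adj p q ↔
    ∃ u b x, D.Rel u b ∧ x < m ∧ s(p, q) = s(pt u b x, pt u b (x + 1))
  pt_eq_iff : ∀ {u u' b b' x x'}, D.Rel u b → D.Rel u' b' → x ≤ m → x' ≤ m →
    (pt u b x = pt u' b' x' ↔ x = x' ∧ (x < m → u = u') ∧ (0 < x → b = b'))

namespace HubBigraph

variable (D m) (u' : U) (b' : B) (y : ℕ)

open Classical in
/-- The distance from the point `(u', b', y)` of the `m`-subdivision to the left vertex `u`. -/
noncomputable def distLeft (u : U) : ℕ :=
  min (y + if u = u' then 0 else 2 * m) ((m - y) + if D.Rel u b' then m else 3 * m)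

open Classical in
/-- The distance from the point `(u', b', y)` of the `m`-subdivision to the right vertex `b`. -/
noncomputable def distRight (b : B) : ℕ :=
  min (y + if D.Rel u' b then m else 3 * m) ((m - y) + if b = b' then 0 else 2 * m)

open Classical in
/-- The distance from `(u', b', y)` to `(u, b, x)` in the `m`-subdivision. -/
noncomputable def pointDist (u : U) (b : B) (x : ℕ) : ℕ :=
  if u = u' ∧ b = b' then (x - y) + (y - x)
  else min (D.distLeft m u' b' y u + x) (D.distRight m u' b' y b + (m - x))

variable {D m u' b' y} {u u₁ u₂ : U} {b b₁ b₂ : B} {x : ℕ}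

theorem pointDist_zero (hy : y ≤ m) (h' : D.Rel u' b') (h : D.Rel u b) :
    D.pointDist m u' b' y u b 0 = D.distLeft m u' b' y u := by
  unfold pointDist distLeft distRight
  grind

theorem pointDist_top (hy : y ≤ m) (h' : D.Rel u' b') (h : D.Rel u b) :
    D.pointDist m u' b' y u b m = D.distRight m u' b' y b := by
  unfold pointDist distLeft distRight
  grind

theorem pointDist_le_succ :
    D.pointDist m u' b' y u b x ≤ D.pointDist m u' b' y u b (x + 1) + 1 := by
  unfold pointDist
  split <;> omega

theorem pointDist_succ_le (hx : x < m) :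
    D.pointDist m u' b' y u b (x + 1) ≤ D.pointDist m u' b' y u b x + 1 := by
  unfold pointDist
  split <;> omega

theorem pointDist_congr (hm : 0 < m) (hy : y ≤ m) (h' : D.Rel u' b') (h₁ : D.Rel u₁ b₁)
    (h₂ : D.Rel u₂ b₂) (hx : x ≤ m) (hu : x < m → u₁ = u₂) (hb : 0 < x → b₁ = b₂) :
    D.pointDist m u' b' y u₁ b₁ x = D.pointDist m u' b' y u₂ b₂ x := by
  rcases Nat.eq_zero_or_pos x with rfl | hx0
  · rw [pointDist_zero hy h' h₁, pointDist_zero hy h' h₂, hu hm]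
  · obtain rfl := hb hx0
    rcases hx.eq_or_lt with rfl | hxm
    · rw [pointDist_top hy h' h₁, pointDist_top hy h' h₂]
    · rw [hu hxm]

theorem pointDist_left (h : D.Rel u b) (hx : x ≤ m) :
    D.pointDist m u' D.b₀ 0 u b x =
      open Classical in if u = u' then x else if D.Rel u' b then 2 * m - x else 2 * m + x := by
  have h₀ := D.rel_b₀
  unfold pointDist distLeft distRight
  grind

theorem pointDist_right (h : D.Rel u b) (hx : x ≤ m) :
    D.pointDist m D.u₀ b' m u b x =
      open Classical in if b = b' then m - x else if D.Rel u b' then m + x else 3 * m - x := by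
  have h₀ := D.rel_u₀
  unfold pointDist distLeft distRight
  grind

end HubBigraph

namespace SubdivModel

variable (M : SubdivModel D H m) {u u' : U} {b b' : B} {x y : ℕ}

/-- The left branch vertex of `H` corresponding to `u`. -/
def left (u : U) : P := M.pt u D.b₀ 0

/-- The right branch vertex of `H` corresponding to `b`. -/
def right (b : B) : P := M.pt D.u₀ b m

theorem pt_zero (h : D.Rel u b) : M.pt u b 0 = M.left u :=
  (M.pt_eq_iff h (D.rel_b₀ u) m.zero_le m.zero_le).mpr
    ⟨rfl, fun _ => rfl, fun h => absurd h (lt_irrefl 0)⟩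

theorem pt_top (h : D.Rel u b) : M.pt u b m = M.right b :=
  (M.pt_eq_iff h (D.rel_u₀ b) le_rfl le_rfl).mpr
    ⟨rfl, fun h => absurd h (lt_irrefl m), fun _ => rfl⟩

theorem pt_adj (h : D.Rel u b) (hx : x < m) : H.Adj (M.pt u b x) (M.pt u b (x + 1)) :=
  (M.adj_iff _ _).mpr ⟨u, b, x, h, hx, rfl⟩

theorem reachable_left (h : D.Rel u b) (hx : x ≤ m) : H.Reachable (M.pt u b x) (M.left u) := by
  induction x with
  | zero => rw [M.pt_zero h]
  | succ x ih => exact (M.pt_adj h hx).symm.reachable.trans (ih (by omega))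

theorem connected (M : SubdivModel D H m) : H.Connected := by
  have hleft (u : U) : H.Reachable (M.left u) (M.right D.b₀) := by
    rw [← M.pt_top (D.rel_b₀ u)]
    exact (M.reachable_left (D.rel_b₀ u) le_rfl).symm
  have hcenter (p : P) : H.Reachable p (M.right D.b₀) := by
    obtain ⟨u, b, x, h, hx, rfl⟩ := M.exists_eq_pt p
    exact (M.reachable_left h hx).trans (hleft u)
  have : Nonempty P := ⟨M.right D.b₀⟩
  exact ⟨fun p q => (hcenter p).trans (hcenter q).symm⟩

theorem dist_thread_le (h : D.Rel u b) (hx : x ≤ m) (hy : y ≤ m) :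
    H.dist (M.pt u b y) (M.pt u b x) ≤ (x - y) + (y - x) := by
  wlog hyx : y ≤ x generalizing x y
  · rw [dist_comm, add_comm]
    exact this hy hx (Nat.le_of_not_le hyx)
  obtain ⟨d, rfl⟩ := Nat.exists_eq_add_of_le hyx
  induction d with
  | zero => simp
  | succ d ih =>
    have hstep := M.connected.dist_triangle (u := M.pt u b y) (v := M.pt u b (y + d))
      (w := M.pt u b (y + (d + 1)))
    have hadj := dist_eq_one_iff_adj.mpr (M.pt_adj h (x := y + d) (by omega))
    have := ih (by omega) (by omega)
    rw [← add_assoc] at *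
    omega

theorem dist_left_right_le (h : D.Rel u b) : H.dist (M.left u) (M.right b) ≤ m := by
  rw [← M.pt_zero h, ← M.pt_top h]
  simpa using M.dist_thread_le h le_rfl m.zero_le

theorem dist_left_left_le (u u' : U) : H.dist (M.left u) (M.left u') ≤ 2 * m := by
  have htri := M.connected.dist_triangle (u := M.left u) (v := M.right D.b₀) (w := M.left u')
  have hu := M.dist_left_right_le (D.rel_b₀ u)
  have hu' := M.dist_left_right_le (D.rel_b₀ u')
  rw [dist_comm] at hu'
  omega

theorem dist_right_right_le (b b' : B) : H.dist (M.right b) (M.right b') ≤ 2 * m := by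
  have htri := M.connected.dist_triangle (u := M.right b) (v := M.left D.u₀) (w := M.right b')
  have hb := M.dist_left_right_le (D.rel_u₀ b)
  have hb' := M.dist_left_right_le (D.rel_u₀ b')
  rw [dist_comm] at hb
  omega

theorem dist_left_right_le_three_mul (u : U) (b : B) :
    H.dist (M.left u) (M.right b) ≤ 3 * m := by
  have htri := M.connected.dist_triangle (u := M.left u) (v := M.right D.b₀) (w := M.right b)
  have hu := M.dist_left_right_le (D.rel_b₀ u)
  have hb := M.dist_right_right_le D.b₀ b
  omega

theorem dist_left_le (h' : D.Rel u' b') (hy : y ≤ m) (u : U) :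
    H.dist (M.pt u' b' y) (M.left u) ≤ D.distLeft m u' b' y u := by
  have hleft := M.dist_thread_le h' m.zero_le hy
  have hright := M.dist_thread_le h' le_rfl hy
  rw [M.pt_zero h'] at hleft
  rw [M.pt_top h'] at hright
  have htriL := M.connected.dist_triangle (u := M.pt u' b' y) (v := M.left u') (w := M.left u)
  have htriR := M.connected.dist_triangle (u := M.pt u' b' y) (v := M.right b') (w := M.left u)
  refine le_min ?_ ?_
  · split_ifs with hu
    · subst hu; omega
    · have := M.dist_left_left_le u' u
      omega
  · rw [dist_comm (u := M.right b')] at htriR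
    split_ifs with hR
    · have := M.dist_left_right_le hR
      omega
    · have := M.dist_left_right_le_three_mul u b'
      omega

theorem dist_right_le (h' : D.Rel u' b') (hy : y ≤ m) (b : B) :
    H.dist (M.pt u' b' y) (M.right b) ≤ D.distRight m u' b' y b := by
  have hleft := M.dist_thread_le h' m.zero_le hy
  have hright := M.dist_thread_le h' le_rfl hy
  rw [M.pt_zero h'] at hleft
  rw [M.pt_top h'] at hright
  have htriL := M.connected.dist_triangle (u := M.pt u' b' y) (v := M.left u') (w := M.right b)
  have htriR := M.connected.dist_triangle (u := M.pt u' b' y) (v := M.right b') (w := M.right b)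
  refine le_min ?_ ?_
  · split_ifs with hR
    · have := M.dist_left_right_le hR
      omega
    · have := M.dist_left_right_le_three_mul u' b
      omega
  · split_ifs with hb
    · subst hb; omega
    · have := M.dist_right_right_le b' b
      omega

theorem dist_le_pointDist (h' : D.Rel u' b') (hy : y ≤ m) (h : D.Rel u b) (hx : x ≤ m) :
    H.dist (M.pt u' b' y) (M.pt u b x) ≤ D.pointDist m u' b' y u b x := by
  unfold HubBigraph.pointDist
  split_ifs with heq
  · obtain ⟨rfl, rfl⟩ := heq
    exact M.dist_thread_le h hx hy
  · have hleft := M.dist_thread_le h hx m.zero_le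
    have hright := M.dist_thread_le h hx le_rfl
    rw [M.pt_zero h] at hleft
    rw [M.pt_top h] at hright
    have htriL := M.connected.dist_triangle (u := M.pt u' b' y) (v := M.left u) (w := M.pt u b x)
    have htriR := M.connected.dist_triangle (u := M.pt u' b' y) (v := M.right b) (w := M.pt u b x)
    have hL := M.dist_left_le h' hy u
    have hR := M.dist_right_le h' hy b
    omega

theorem pointDist_eq_of_pt_eq {u₁ u₂ : U} {b₁ b₂ : B} {x₁ x₂ : ℕ} (h' : D.Rel u' b') (hy : y ≤ m)
    (h₁ : D.Rel u₁ b₁) (h₂ : D.Rel u₂ b₂) (hx₁ : x₁ ≤ m) (hx₂ : x₂ ≤ m)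
    (he : M.pt u₁ b₁ x₁ = M.pt u₂ b₂ x₂) :
    D.pointDist m u' b' y u₁ b₁ x₁ = D.pointDist m u' b' y u₂ b₂ x₂ := by
  obtain ⟨rfl, hu, hb⟩ := (M.pt_eq_iff h₁ h₂ hx₁ hx₂).mp he
  exact HubBigraph.pointDist_congr M.pos hy h' h₁ h₂ hx₁ hu hb

theorem pointDist_le_length (h' : D.Rel u' b') (hy : y ≤ m) {p q : P}
    (w : H.Walk p q) (hq : q = M.pt u' b' y) (h : D.Rel u b) (hx : x ≤ m) (hp : M.pt u b x = p) :
    D.pointDist m u' b' y u b x ≤ w.length := by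
  induction w generalizing u b x with
  | nil =>
    rw [M.pointDist_eq_of_pt_eq h' hy h h' hx hy (hp.trans hq)]
    simp [HubBigraph.pointDist]
  | cons hadj w ih =>
    subst hp
    obtain ⟨u₁, b₁, x₁, h₁, hx₁, he⟩ := (M.adj_iff _ _).mp hadj
    rw [Walk.length_cons]
    rcases Sym2.eq_iff.mp he with ⟨hp, hp'⟩ | ⟨hp, hp'⟩
    · rw [M.pointDist_eq_of_pt_eq h' hy h h₁ hx hx₁.le hp]
      exact HubBigraph.pointDist_le_succ.trans (Nat.succ_le_succ (ih hq h₁ hx₁ hp'.symm))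
    · rw [M.pointDist_eq_of_pt_eq h' hy h h₁ hx hx₁ hp]
      exact (HubBigraph.pointDist_succ_le hx₁).trans
        (Nat.succ_le_succ (ih hq h₁ hx₁.le hp'.symm))

theorem dist_eq (h' : D.Rel u' b') (hy : y ≤ m) (h : D.Rel u b) (hx : x ≤ m) :
    H.dist (M.pt u' b' y) (M.pt u b x) = D.pointDist m u' b' y u b x := by
  refine le_antisymm (M.dist_le_pointDist h' hy h hx) ?_
  obtain ⟨w, hw⟩ := M.connected.exists_walk_length_eq_dist (M.pt u b x) (M.pt u' b' y)
  rw [dist_comm, ← hw]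
  exact M.pointDist_le_length h' hy w rfl h hx rfl

theorem dist_left_pt (u' : U) (h : D.Rel u b) (hx : x ≤ m) : H.dist (M.left u') (M.pt u b x) =
    open Classical in if u = u' then x else if D.Rel u' b then 2 * m - x else 2 * m + x :=
  (M.dist_eq (D.rel_b₀ u') m.zero_le h hx).trans (HubBigraph.pointDist_left h hx)

theorem dist_right_pt (b' : B) (h : D.Rel u b) (hx : x ≤ m) : H.dist (M.right b') (M.pt u b x) =
    open Classical in if b = b' then m - x else if D.Rel u b' then m + x else 3 * m - x :=
  (M.dist_eq (D.rel_u₀ b') le_rfl h hx).trans (HubBigraph.pointDist_right h hx)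

end SubdivModel

section Tree

/-- A decision tree of depth `n` for the right vertices in `S`: each of its `n` questions asks
whether the right vertex is adjacent to some left vertex `u`, and every set of candidates left at
the end satisfies `Leaf`. -/
inductive Tree (D : HubBigraph U B) (Leaf : Set B → Prop) : ℕ → Set B → Prop
  | leaf {S} (h : Leaf S) : Tree D Leaf 0 S
  | split {n S} (u : U) (hpos : Tree D Leaf n {b ∈ S | D.Rel u b})
      (hneg : Tree D Leaf n {b ∈ S | ¬D.Rel u b}) : Tree D Leaf (n + 1) S

theorem Tree.graft {L L' : Set B → Prop} {n k : ℕ} {S : Set B} (hT : Tree D L n S)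
    (h : ∀ S, L S → Tree D L' k S) : Tree D L' (n + k) S := by
  induction hT with
  | leaf hS => simpa using h _ hS
  | split u _ _ ihpos ihneg =>
    rw [Nat.succ_add_eq_add_succ]
    exact .split u ihpos ihneg

theorem Tree.of_signatures {L : Set B → Prop} {n : ℕ} (u : Fin n → U) {S : Set B}
    (h : ∀ σ : Fin n → Prop, L {b ∈ S | ∀ i, D.Rel (u i) b ↔ σ i}) : Tree D L n S := by
  induction n generalizing S with
  | zero => exact .leaf (by simpa using h Fin.elim0)
  | succ n ih =>
    refine .split (u 0) (ih (Fin.tail u) fun σ => ?_) (ih (Fin.tail u) fun σ => ?_)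
    · simpa [Fin.forall_fin_succ, and_assoc, Fin.tail] using h (Fin.cons True σ)
    · simpa [Fin.forall_fin_succ, and_assoc, Fin.tail] using h (Fin.cons False σ)

/-- At most three right vertices, which the point at distance `2` from `t` on the thread from `t` to
`b₁` tells apart for a robber who is at distance at most `1` from them. -/
def IsTripod (D : HubBigraph U B) (S : Set B) : Prop :=
  Tree D Set.Subsingleton 2 S ∧ ∃ t b₁ b₂ b₃, D.Rel t b₁ ∧ D.Rel t b₂ ∧ ¬D.Rel t b₃ ∧ b₁ ≠ b₂ ∧
    S ⊆ {b₁, b₂, b₃}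

end Tree

namespace SubdivModel

variable (M : SubdivModel D H m) {C : Set U} {S : Set B} {u v : U} {b c : B} {x y : ℕ}

section ProbeAnswers

theorem eq_of_dist_left_eq {u' : U} (hu : D.Rel u b) (hx : x ≤ m) (hv : D.Rel v c) (hy : y ≤ m)
    (h : H.dist (M.left u') (M.pt u b x) = H.dist (M.left u') (M.pt v c y)) :
    x = y ∧ (x < m → (u = u' ↔ v = u')) ∧ (0 < x → (D.Rel u' b ↔ D.Rel u' c)) := by
  have := M.pos
  rw [M.dist_left_pt u' hu hx, M.dist_left_pt u' hv hy] at h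
  grind

theorem eq_of_dist_right_eq {b' : B} (hu : D.Rel u b) (hx : x ≤ m) (hv : D.Rel v c) (hy : y ≤ m)
    (h : H.dist (M.right b') (M.pt u b x) = H.dist (M.right b') (M.pt v c y)) :
    x = y ∧ (0 < x → (b = b' ↔ c = b')) := by
  have := M.pos
  rw [M.dist_right_pt b' hu hx, M.dist_right_pt b' hv hy] at h
  grind

open Classical in
theorem dist_thread_one (hm : 3 ≤ m) (u' : U) (h : D.Rel u b) (hx : x ≤ 1) :
    H.dist (M.pt u' D.b₀ 1) (M.pt u b x) =
      if u = u' then if x = 0 then 1 else if b = D.b₀ then 0 else 2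
      else if x = 0 then 2 * m - 1 else if b = D.b₀ then 2 * m - 2 else 2 * m := by
  have h₀ := D.rel_b₀
  rw [M.dist_eq (h₀ u') M.pos h (by omega)]
  unfold HubBigraph.pointDist HubBigraph.distLeft HubBigraph.distRight
  grind

theorem eq_of_dist_thread_one_eq (hm : 3 ≤ m) {u' : U} (hu : D.Rel u b) (hx : x ≤ 1)
    (hv : D.Rel v c) (hy : y ≤ 1)
    (h : H.dist (M.pt u' D.b₀ 1) (M.pt u b x) = H.dist (M.pt u' D.b₀ 1) (M.pt v c y)) :
    x = y ∧ (u = u' ↔ v = u') ∧ (0 < x → (b = D.b₀ ↔ c = D.b₀)) := by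
  rw [M.dist_thread_one hm u' hu hx, M.dist_thread_one hm u' hv hy] at h
  grind

open Classical in
theorem dist_thread_two (hm : 4 ≤ m) {t : U} {b₁ b₂ b₃ : B} (h₁ : D.Rel t b₁) (h₂ : D.Rel t b₂)
    (h₃ : ¬D.Rel t b₃) (h₁₂ : b₁ ≠ b₂) (h : D.Rel u b) (hx : x ≤ m) (hxm : m ≤ x + 2)
    (hb : b ∈ ({b₁, b₂, b₃} : Set B)) :
    H.dist (M.pt t b₁ 2) (M.pt u b x) =
      if b = b₁ then if u = t then x - 2 else 2 * m - 2 - x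
      else if b = b₂ then if u = t then min (2 + x) (2 * m + 2 - x) else 2 * m + 2 - x
      else if D.Rel u b₁ then min (2 * m - 2 + x) (4 * m - 2 - x)
      else min (2 * m + 2 + x) (4 * m - 2 - x) := by
  rw [M.dist_eq h₁ (by omega) h hx]
  unfold HubBigraph.pointDist HubBigraph.distLeft HubBigraph.distRight
  rcases hb with rfl | rfl | rfl <;> grind

theorem eq_of_dist_thread_two_eq (hm : 4 ≤ m) {t : U} {b₁ b₂ b₃ : B} (h₁ : D.Rel t b₁)
    (h₂ : D.Rel t b₂) (h₃ : ¬D.Rel t b₃) (h₁₂ : b₁ ≠ b₂)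
    (hu : D.Rel u b) (hx : x ≤ m) (hxm : m ≤ x + 2) (hb : b ∈ ({b₁, b₂, b₃} : Set B))
    (hv : D.Rel v c) (hy : y ≤ m) (hym : m ≤ y + 2) (hc : c ∈ ({b₁, b₂, b₃} : Set B))
    (h : H.dist (M.pt t b₁ 2) (M.pt u b x) = H.dist (M.pt t b₁ 2) (M.pt v c y)) :
    x = y ∧ (m ≤ x + 1 → b = c) := by
  rw [M.dist_thread_two hm h₁ h₂ h₃ h₁₂ hu hx hxm hb,
    M.dist_thread_two hm h₁ h₂ h₃ h₁₂ hv hy hym hc] at h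
  have h₃₁ : b₃ ≠ b₁ := by rintro rfl; exact h₃ h₁
  have h₃₂ : b₃ ≠ b₂ := by rintro rfl; exact h₃ h₂
  rcases hb with rfl | rfl | rfl <;> rcases hc with rfl | rfl | rfl <;> grind

end ProbeAnswers

section LevelSets

/-- The points at distance `x` from `C` on the threads from `C` to `S`. -/
def levelSet (C : Set U) (S : Set B) (x : ℕ) : Set P :=
  {p | ∃ u ∈ C, ∃ b ∈ S, D.Rel u b ∧ p = M.pt u b x}

theorem levelSet_subsingleton (hC : x < m → C.Subsingleton) (hS : 0 < x → S.Subsingleton)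
    (hx : x ≤ m) : (M.levelSet C S x).Subsingleton := by
  rintro _ ⟨u, hu, b, hb, h, rfl⟩ _ ⟨v, hv, c, hc, h', rfl⟩
  exact (M.pt_eq_iff h h' hx hx).mpr ⟨rfl, fun hxm => hC hxm hu hv, fun h0 => hS h0 hb hc⟩

/-- One cop can locate a robber who, after a probe, is known to be in `levelSet C S x`. -/
def WinsAt (C : Set U) (S : Set B) (x : ℕ) : Prop :=
  CopWinsAfter H 1 (M.levelSet C S x)

/-- `(u, b, y)` are coordinates of a point that a robber in `levelSet C S x` can reach by one
move. -/
structure IsNear (D : HubBigraph U B) (m : ℕ) (C : Set U) (S : Set B) (x : ℕ)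
    (u : U) (b : B) (y : ℕ) : Prop where
  rel : D.Rel u b
  le : y ≤ m
  le_succ : y ≤ x + 1
  le_of_succ : x ≤ y + 1
  mem_left : x < m → u ∈ C
  mem_right : 0 < x → b ∈ S

theorem exists_isNear_of_mem_closedNbhd (hx : x ≤ m) {p : P}
    (hp : p ∈ closedNbhd H (M.levelSet C S x)) :
    ∃ u b y, IsNear D m C S x u b y ∧ p = M.pt u b y := by
  obtain ⟨_, ⟨u, hu, b, hb, h, rfl⟩, rfl | hadj⟩ := hp
  · exact ⟨u, b, x, ⟨h, hx, by omega, by omega, fun _ => hu, fun _ => hb⟩, rfl⟩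
  obtain ⟨v, c, y, hv, hy, he⟩ := (M.adj_iff _ _).mp hadj
  rcases Sym2.eq_iff.mp he with ⟨hp, rfl⟩ | ⟨hp, rfl⟩
  · obtain ⟨rfl, huv, hbc⟩ := (M.pt_eq_iff h hv hx hy.le).mp hp
    exact ⟨v, c, x + 1, ⟨hv, hy, le_rfl, by omega, fun hxm => huv hxm ▸ hu,
      fun h0 => hbc h0 ▸ hb⟩, rfl⟩
  · obtain ⟨rfl, huv, hbc⟩ := (M.pt_eq_iff h hv hx hy).mp hp
    exact ⟨v, c, y, ⟨hv, hy.le, by omega, le_rfl, fun hxm => huv hxm ▸ hu,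
      fun h0 => hbc h0 ▸ hb⟩, rfl⟩

theorem winsAt_of_probe (hx : x ≤ m) (q : P)
    (h : ∀ u b y, IsNear D m C S x u b y → ∃ C' S', M.WinsAt C' S' y ∧
      ∀ v c z, IsNear D m C S x v c z → H.dist q (M.pt v c z) = H.dist q (M.pt u b y) →
        z = y ∧ v ∈ C' ∧ c ∈ S') : M.WinsAt C S x := by
  refine fun _ => .of_probe (fun _ => q) fun p hp => ?_
  obtain ⟨u, b, y, hn, rfl⟩ := M.exists_isNear_of_mem_closedNbhd hx hp
  obtain ⟨C', S', hwin, hsub⟩ := h u b y hn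
  refine ⟨_, hwin, fun p' hp' he => ?_⟩
  obtain ⟨v, c, z, hn', rfl⟩ := M.exists_isNear_of_mem_closedNbhd hx hp'
  obtain ⟨rfl, hv, hc⟩ := hsub v c z hn' (he 0)
  exact ⟨v, hv, c, hc, hn'.rel, rfl⟩

theorem winsAt_of_left_probe (u' : U) (hx₀ : 0 < x) (hx : x < m) (hzero : M.WinsAt C Set.univ 0)
    (h : ∀ y, 0 < y → y ≤ m → y ≤ x + 1 →
      M.WinsAt C {b ∈ S | D.Rel u' b} y ∧ M.WinsAt C {b ∈ S | ¬D.Rel u' b} y) :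
    M.WinsAt C S x := by
  refine M.winsAt_of_probe hx.le (M.left u') fun u b y hn => ?_
  rcases Nat.eq_zero_or_pos y with rfl | hy₀
  · refine ⟨C, Set.univ, hzero, fun v c z hn' he => ?_⟩
    obtain ⟨hz, -, -⟩ := M.eq_of_dist_left_eq hn'.rel hn'.le hn.rel hn.le he
    exact ⟨hz, hn'.mem_left hx, trivial⟩
  · obtain ⟨hpos, hneg⟩ := h y hy₀ hn.le hn.le_succ
    by_cases hb : D.Rel u' b
    · refine ⟨C, _, hpos, fun v c z hn' he => ?_⟩
      obtain ⟨rfl, -, hc⟩ := M.eq_of_dist_left_eq hn'.rel hn'.le hn.rel hn.le he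
      exact ⟨rfl, hn'.mem_left hx, hn'.mem_right hx₀, (hc hy₀).mpr hb⟩
    · refine ⟨C, _, hneg, fun v c z hn' he => ?_⟩
      obtain ⟨rfl, -, hc⟩ := M.eq_of_dist_left_eq hn'.rel hn'.le hn.rel hn.le he
      exact ⟨rfl, hn'.mem_left hx, hn'.mem_right hx₀, (hc hy₀).not.mpr hb⟩

theorem winsAt_of_left_probe_of_subsingleton (u' : U) (hS : S.Subsingleton) (hx₀ : 0 < x)
    (hx : x < m) (hzero : M.WinsAt C Set.univ 0)
    (h : ∀ y, 0 < y → y ≤ m → M.WinsAt {u'} S y ∧ M.WinsAt (C \ {u'}) S y) :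
    M.WinsAt C S x := by
  refine M.winsAt_of_probe hx.le (M.left u') fun u b y hn => ?_
  have hlevel {v c z} (hn' : IsNear D m C S x v c z)
      (he : H.dist (M.left u') (M.pt v c z) = H.dist (M.left u') (M.pt u b y)) :=
    M.eq_of_dist_left_eq hn'.rel hn'.le hn.rel hn.le he
  rcases Nat.eq_zero_or_pos y with rfl | hy₀
  · exact ⟨C, Set.univ, hzero, fun v c z hn' he => ⟨(hlevel hn' he).1, hn'.mem_left hx, trivial⟩⟩
  rcases hn.le.eq_or_lt with rfl | hym
  · exact ⟨C, S, copWinsAfter_of_subsingleton (M.levelSet_subsingleton (by simp) (fun _ => hS)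
      le_rfl), fun v c z hn' he => ⟨(hlevel hn' he).1, hn'.mem_left hx, hn'.mem_right hx₀⟩⟩
  by_cases hu : u = u'
  · refine ⟨{u'}, S, (h y hy₀ hn.le).1, fun v c z hn' he => ?_⟩
    obtain ⟨rfl, hv, -⟩ := hlevel hn' he
    exact ⟨rfl, (hv hym).mpr hu, hn'.mem_right hx₀⟩
  · refine ⟨C \ {u'}, S, (h y hy₀ hn.le).2, fun v c z hn' he => ?_⟩
    obtain ⟨rfl, hv, -⟩ := hlevel hn' he
    exact ⟨rfl, ⟨hn'.mem_left hx, (hv hym).not.mpr hu⟩, hn'.mem_right hx₀⟩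

theorem winsAt_univ_of_right_probe (b' : B) (hx₀ : 0 < x) (hx : x ≤ m)
    (hzero : M.WinsAt Set.univ Set.univ 0)
    (h : ∀ y, 0 < y → y ≤ m → M.WinsAt Set.univ {b'} y ∧ M.WinsAt Set.univ (S \ {b'}) y) :
    M.WinsAt Set.univ S x := by
  refine M.winsAt_of_probe hx (M.right b') fun u b y hn => ?_
  have hlevel {v c z} (hn' : IsNear D m Set.univ S x v c z)
      (he : H.dist (M.right b') (M.pt v c z) = H.dist (M.right b') (M.pt u b y)) :=
    M.eq_of_dist_right_eq hn'.rel hn'.le hn.rel hn.le he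
  rcases Nat.eq_zero_or_pos y with rfl | hy₀
  · exact ⟨_, _, hzero, fun v c z hn' he => ⟨(hlevel hn' he).1, trivial, trivial⟩⟩
  by_cases hb : b = b'
  · refine ⟨_, _, (h y hy₀ hn.le).1, fun v c z hn' he => ?_⟩
    obtain ⟨rfl, hc⟩ := hlevel hn' he
    exact ⟨rfl, trivial, (hc hy₀).mpr hb⟩
  · refine ⟨_, _, (h y hy₀ hn.le).2, fun v c z hn' he => ?_⟩
    obtain ⟨rfl, hc⟩ := hlevel hn' he
    exact ⟨rfl, trivial, hn'.mem_right hx₀, (hc hy₀).not.mpr hb⟩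

theorem winsAt_zero_of_thread_probe (hm : 3 ≤ m) (u' : U)
    (hzero : M.WinsAt {u'} Set.univ 0 ∧ M.WinsAt (C \ {u'}) Set.univ 0)
    (hhub : M.WinsAt {u'} {D.b₀} 1 ∧ M.WinsAt (C \ {u'}) {D.b₀} 1)
    (hother : M.WinsAt {u'} {D.b₀}ᶜ 1 ∧ M.WinsAt (C \ {u'}) {D.b₀}ᶜ 1) :
    M.WinsAt C Set.univ 0 := by
  refine M.winsAt_of_probe m.zero_le (M.pt u' D.b₀ 1) fun u b y hn => ?_
  suffices hC : ∀ C', M.WinsAt C' Set.univ 0 → M.WinsAt C' {D.b₀} 1 → M.WinsAt C' {D.b₀}ᶜ 1 →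
      (∀ v ∈ C, (v = u' ↔ u = u') → v ∈ C') → ∃ C' S', M.WinsAt C' S' y ∧
        ∀ v c z, IsNear D m C Set.univ 0 v c z →
          H.dist (M.pt u' D.b₀ 1) (M.pt v c z) = H.dist (M.pt u' D.b₀ 1) (M.pt u b y) →
            z = y ∧ v ∈ C' ∧ c ∈ S' by
    by_cases hu : u = u'
    · exact hC _ hzero.1 hhub.1 hother.1 fun v _ hv => hv.mpr hu
    · exact hC _ hzero.2 hhub.2 hother.2 fun v hvC hv => ⟨hvC, hv.not.mpr hu⟩
  intro C' h₀ h₁ h₂ hC'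
  have hlevel {v c z} (hn' : IsNear D m C Set.univ 0 v c z)
      (he : H.dist (M.pt u' D.b₀ 1) (M.pt v c z) = H.dist (M.pt u' D.b₀ 1) (M.pt u b y)) :
      z = y ∧ v ∈ C' ∧ (0 < z → (c = D.b₀ ↔ b = D.b₀)) :=
    have ⟨hz, hv, hc⟩ :=
      M.eq_of_dist_thread_one_eq hm hn'.rel hn'.le_succ hn.rel hn.le_succ he
    ⟨hz, hC' v (hn'.mem_left M.pos) hv, hc⟩
  obtain rfl | rfl : y = 0 ∨ y = 1 := Nat.le_one_iff_eq_zero_or_eq_one.mp hn.le_succ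
  · exact ⟨C', _, h₀, fun v c z hn' he => ⟨(hlevel hn' he).1, (hlevel hn' he).2.1, trivial⟩⟩
  · by_cases hb : b = D.b₀
    · refine ⟨C', _, h₁, fun v c z hn' he => ?_⟩
      obtain ⟨rfl, hv, hc⟩ := hlevel hn' he
      exact ⟨rfl, hv, (hc one_pos).mpr hb⟩
    · refine ⟨C', _, h₂, fun v c z hn' he => ?_⟩
      obtain ⟨rfl, hv, hc⟩ := hlevel hn' he
      exact ⟨rfl, hv, (hc one_pos).not.mpr hb⟩

end LevelSets

section CopStrategy

/-- One cop can locate a robber whose last left vertex is known to be in `C` as soon as the robber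
returns to level `0` or the right end of his thread is known. -/
structure IsControlled (C : Set U) : Prop where
  zero : M.WinsAt C Set.univ 0
  narrow : ∀ S : Set B, S.Subsingleton → ∀ x, 0 < x → x ≤ m → M.WinsAt C S x

variable {M}

theorem IsControlled.winsAt_of_tree (hC : M.IsControlled C) {n : ℕ}
    (hT : Tree D Set.Subsingleton n S) (hx₀ : 0 < x) (hx : n + x ≤ m) : M.WinsAt C S x := by
  induction hT generalizing x with
  | leaf hS => exact hC.narrow _ hS x hx₀ (by omega)
  | split u _ _ ihpos ihneg =>
    exact M.winsAt_of_left_probe u hx₀ (by omega) hC.zero fun y hy₀ _ hyx =>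
      ⟨ihpos hy₀ (by omega), ihneg hy₀ (by omega)⟩

theorem IsControlled.winsAt_of_isTripod (hC : M.IsControlled C) (hm : 4 ≤ m)
    (hS : IsTripod D S) (hx : x + 1 = m) : M.WinsAt C S x := by
  obtain ⟨hT, t, b₁, b₂, b₃, h₁, h₂, h₃, h₁₂, hsub⟩ := hS
  refine M.winsAt_of_probe (by omega) (M.pt t b₁ 2) fun u b y hn => ?_
  have hanswer {v c z} (hn' : IsNear D m C S x v c z)
      (he : H.dist (M.pt t b₁ 2) (M.pt v c z) = H.dist (M.pt t b₁ 2) (M.pt u b y)) :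
      z = y ∧ (m ≤ z + 1 → c = b) :=
    M.eq_of_dist_thread_two_eq hm h₁ h₂ h₃ h₁₂
      hn'.rel hn'.le (by have := hn'.le_of_succ; omega) (hsub (hn'.mem_right (by omega)))
      hn.rel hn.le (by have := hn.le_of_succ; omega) (hsub (hn.mem_right (by omega))) he
  by_cases hy : m ≤ y + 1
  · refine ⟨C, {b}, hC.narrow _ Set.subsingleton_singleton y (by omega) hn.le,
      fun v c z hn' he => ?_⟩
    obtain ⟨rfl, hc⟩ := hanswer hn' he
    exact ⟨rfl, hn'.mem_left (by omega), hc hy⟩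
  · refine ⟨C, S, hC.winsAt_of_tree hT ?_ (by omega), fun v c z hn' he =>
      ⟨(hanswer hn' he).1, hn'.mem_left (by omega), hn'.mem_right (by omega)⟩⟩
    have := hn.le_of_succ
    omega

/- If the robber climbs in every round, the tripod leaf is reached one level below the top; if he
once fails to climb, there is time for the two more questions that finish the tree. -/
theorem IsControlled.winsAt_of_tripod_tree (hC : M.IsControlled C) (hm : 4 ≤ m) {n : ℕ}
    (hT : Tree D (IsTripod D) n S) (hx₀ : 0 < x) (hx : n + x + 1 = m) : M.WinsAt C S x := by
  induction hT generalizing x with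
  | leaf hS => exact hC.winsAt_of_isTripod hm hS (by omega)
  | @split n S u hpos hneg ihpos ihneg =>
    have hfallback {S' : Set B} {y : ℕ} (hT' : Tree D (IsTripod D) n S') (hy₀ : 0 < y)
        (hyx : y ≤ x) : M.WinsAt C S' y :=
      hC.winsAt_of_tree (hT'.graft fun _ hL => hL.1) hy₀ (by omega)
    refine M.winsAt_of_left_probe u hx₀ (by omega) hC.zero fun y hy₀ _ hyx => ?_
    rcases Nat.le_succ_iff.mp hyx with hyx | rfl
    · exact ⟨hfallback hpos hy₀ hyx, hfallback hneg hy₀ hyx⟩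
    · exact ⟨ihpos hy₀ (by omega), ihneg hy₀ (by omega)⟩

theorem isControlled_of_forall [Finite U] (hm : 3 ≤ m)
    (h : ∀ C, M.IsControlled C → M.WinsAt C {D.b₀}ᶜ 1) (C : Set U) : M.IsControlled C := by
  induction C using WellFoundedLT.induction with | ind C ih
  rcases C.subsingleton_or_nontrivial with hC | hC
  · exact ⟨copWinsAfter_of_subsingleton (M.levelSet_subsingleton (fun _ => hC) (by simp) m.zero_le),
      fun S hS x _ hx => copWinsAfter_of_subsingleton
        (M.levelSet_subsingleton (fun _ => hC) (fun _ => hS) hx)⟩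
  obtain ⟨u', hu'⟩ := hC.nonempty
  have hin := ih {u'} ((Set.singleton_subset_iff.mpr hu').ssubset_of_ne hC.ne_singleton.symm)
  have hout := ih (C \ {u'}) (Set.sdiff_singleton_ssubset.mpr hu')
  have hzero : M.WinsAt C Set.univ 0 := M.winsAt_zero_of_thread_probe hm u'
    ⟨hin.zero, hout.zero⟩
    ⟨hin.narrow _ Set.subsingleton_singleton 1 one_pos M.pos,
      hout.narrow _ Set.subsingleton_singleton 1 one_pos M.pos⟩
    ⟨h _ hin, h _ hout⟩
  refine ⟨hzero, fun S hS x hx₀ hx => ?_⟩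
  rcases hx.eq_or_lt with rfl | hxm
  · exact copWinsAfter_of_subsingleton (M.levelSet_subsingleton (by simp) (fun _ => hS) le_rfl)
  · exact M.winsAt_of_left_probe_of_subsingleton u' hS hx₀ hxm hzero fun y hy₀ hy =>
      ⟨hin.narrow S hS y hy₀ hy, hout.narrow S hS y hy₀ hy⟩

theorem IsControlled.winsAt_univ [Finite B] (hU : M.IsControlled Set.univ) (S : Set B)
    (hx₀ : 0 < x) (hx : x ≤ m) : M.WinsAt Set.univ S x := by
  induction S using WellFoundedLT.induction generalizing x with | ind S ih
  rcases S.subsingleton_or_nontrivial with hS | hS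
  · exact hU.narrow S hS x hx₀ hx
  obtain ⟨b', hb'⟩ := hS.nonempty
  exact M.winsAt_univ_of_right_probe b' hx₀ hx hU.zero fun y hy₀ hy =>
    ⟨ih {b'} ((Set.singleton_subset_iff.mpr hb').ssubset_of_ne hS.ne_singleton.symm) hy₀ hy,
      ih (S \ {b'}) (Set.sdiff_singleton_ssubset.mpr hb') hy₀ hy⟩

theorem IsControlled.localizable [Finite B] (hU : M.IsControlled Set.univ) : Localizable H 1 := by
  refine CopWins.localizable (.of_probe (fun _ => M.left D.u₀) fun p _ => ?_)
  obtain ⟨u, b, x, h, hx, rfl⟩ := M.exists_eq_pt p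
  have hwin : M.WinsAt Set.univ Set.univ x := by
    rcases Nat.eq_zero_or_pos x with rfl | hx₀
    · exact hU.zero
    · exact hU.winsAt_univ _ hx₀ hx
  refine ⟨_, hwin, fun q _ he => ?_⟩
  obtain ⟨v, c, y, hv, hy, rfl⟩ := M.exists_eq_pt q
  obtain ⟨rfl, -, -⟩ := M.eq_of_dist_left_eq hv hy h hx (he 0)
  exact ⟨v, trivial, c, trivial, hv, rfl⟩

theorem localizable_of_tree [Finite U] [Finite B] (M : SubdivModel D H m) (hm : 3 ≤ m)
    (hT : Tree D Set.Subsingleton (m - 1) {D.b₀}ᶜ ∨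
      4 ≤ m ∧ Tree D (IsTripod D) (m - 2) {D.b₀}ᶜ) : Localizable H 1 := by
  refine (isControlled_of_forall (M := M) hm (fun C hC => ?_) Set.univ).localizable
  rcases hT with hT | ⟨hm, hT⟩
  · exact hC.winsAt_of_tree hT one_pos (by omega)
  · exact hC.winsAt_of_tripod_tree hm hT one_pos (by omega)

end CopStrategy

end SubdivModel

namespace HubBigraph

/-- The left vertices adjacent to every right vertex; probing one of them tells nothing about the
right end of the robber's thread. -/
def full (D : HubBigraph U B) : Set U := {u | ∀ b, D.Rel u b}

variable {u' u₁ u₂ : U} {b' b b₁ b₂ : B} {x y : ℕ}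

theorem pointDist_eq_of_mem_full (h₁ : u₁ ∈ D.full) (h₂ : u₂ ∈ D.full) (hne₁ : u₁ ≠ u')
    (hne₂ : u₂ ≠ u') :
    D.pointDist m u' b' y u₁ b x = D.pointDist m u' b' y u₂ b x := by
  simp [pointDist, distLeft, hne₁, hne₂, h₁ b', h₂ b']

theorem pointDist_eq_of_rel_iff (hne₁ : b₁ ≠ b') (hne₂ : b₂ ≠ b') (h : D.Rel u' b₁ ↔ D.Rel u' b₂)
    (u : U) : D.pointDist m u' b' y u b₁ x = D.pointDist m u' b' y u b₂ x := by
  by_cases hr : D.Rel u' b₂ <;> simp [pointDist, distRight, hne₁, hne₂, h, hr]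

theorem exists_half_of_two_mul_le_ncard [Finite B] (D : HubBigraph U B) (u' : U) (b' : B)
    {T : Set B} {n : ℕ} (hn : 2 * n ≤ T.ncard) :
    ∃ T' ⊆ T, n ≤ T'.ncard ∧ b' ∉ T' ∧ ∀ b₁ ∈ T', ∀ b₂ ∈ T', D.Rel u' b₁ ↔ D.Rel u' b₂ := by
  have hsplit := Set.ncard_inter_add_ncard_sdiff_eq_ncard (T \ {b'}) {b | D.Rel u' b}
  have hdiff := Set.pred_ncard_le_ncard_sdiff_singleton T b'
  by_cases hhalf : n ≤ ((T \ {b'}) ∩ {b | D.Rel u' b}).ncard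
  · exact ⟨_, fun b hb => hb.1.1, hhalf, fun hb => hb.1.2 rfl,
      fun b₁ h₁ b₂ h₂ => iff_of_true h₁.2 h₂.2⟩
  · exact ⟨(T \ {b'}) \ {b | D.Rel u' b}, fun b hb => hb.1.1, by omega, fun hb => hb.1.2 rfl,
      fun b₁ h₁ b₂ h₂ => iff_of_false h₁.2 h₂.2⟩

end HubBigraph

namespace SubdivModel

section RobberStrategy

variable (M : SubdivModel D H m) {C : Set U} {S : Set B} {u' : U} {b' b : B} {x y : ℕ}

theorem probeBlind_levelSet_singleton_right (h' : D.Rel u' b') (hy : y ≤ m) (hC : C ⊆ D.full)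
    (hu' : u' ∉ C) (hx : x ≤ m) :
    ProbeBlind H (fun _ : Fin 1 => M.pt u' b' y) (M.levelSet C {b} x) := by
  rintro - _ ⟨u₁, h₁, c, rfl, hr₁, rfl⟩ _ ⟨u₂, h₂, d, rfl, hr₂, rfl⟩
  rw [M.dist_eq h' hy hr₁ hx, M.dist_eq h' hy hr₂ hx]
  exact HubBigraph.pointDist_eq_of_mem_full (hC h₁) (hC h₂) (ne_of_mem_of_not_mem h₁ hu')
    (ne_of_mem_of_not_mem h₂ hu')

theorem probeBlind_levelSet_singleton_left (h' : D.Rel u' b') (hy : y ≤ m) {u : U} (hb' : b' ∉ S)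
    (hS : ∀ b₁ ∈ S, ∀ b₂ ∈ S, D.Rel u' b₁ ↔ D.Rel u' b₂) (hx : x ≤ m) :
    ProbeBlind H (fun _ : Fin 1 => M.pt u' b' y) (M.levelSet {u} S x) := by
  rintro - _ ⟨v, rfl, b₁, h₁, hr₁, rfl⟩ _ ⟨w, rfl, b₂, h₂, hr₂, rfl⟩
  rw [M.dist_eq h' hy hr₁ hx, M.dist_eq h' hy hr₂ hx]
  exact HubBigraph.pointDist_eq_of_rel_iff (ne_of_mem_of_not_mem h₁ hb')
    (ne_of_mem_of_not_mem h₂ hb') (hS b₁ h₁ b₂ h₂) _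

theorem levelSet_succ_subset_closedNbhd (hx : x < m) :
    M.levelSet C S (x + 1) ⊆ closedNbhd H (M.levelSet C S x) := by
  rintro _ ⟨u, hu, b, hb, h, rfl⟩
  exact ⟨_, ⟨u, hu, b, hb, h, rfl⟩, .inr (M.pt_adj h hx)⟩

theorem levelSet_subset_closedNbhd_succ (hx : x < m) :
    M.levelSet C S x ⊆ closedNbhd H (M.levelSet C S (x + 1)) := by
  rintro _ ⟨u, hu, b, hb, h, rfl⟩
  exact ⟨_, ⟨u, hu, b, hb, h, rfl⟩, .inr (M.pt_adj h hx).symm⟩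

theorem levelSet_mono {C' : Set U} {S' : Set B} (hC : C ⊆ C') (hS : S ⊆ S') :
    M.levelSet C S x ⊆ M.levelSet C' S' x :=
  fun _ ⟨u, hu, b, hb, h⟩ => ⟨u, hC hu, b, hS hb, h⟩

theorem levelSet_zero_subset (hC : C ⊆ D.full) (S : Set B) (b : B) :
    M.levelSet C S 0 ⊆ M.levelSet C {b} 0 := by
  rintro _ ⟨u, hu, c, -, h, rfl⟩
  exact ⟨u, hu, b, rfl, hC hu b, by rw [M.pt_zero h, M.pt_zero (hC hu b)]⟩

theorem levelSet_top_subset {u : U} (hu : u ∈ D.full) (C : Set U) (S : Set B) :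
    M.levelSet C S m ⊆ M.levelSet {u} S m := by
  rintro _ ⟨v, -, b, hb, h, rfl⟩
  exact ⟨u, rfl, b, hb, hu b, by rw [M.pt_top h, M.pt_top (hu b)]⟩

/-- The candidate sets maintained by the robber on the subdivision: descending a thread he keeps
many possible left ends, of which each probe removes at most one; climbing a thread he keeps many
possible right ends, of which each probe removes at most half, rounded up. -/
inductive IsElusive (M : SubdivModel D H m) : Set P → Prop
  | descend {C : Set U} (b : B) {x : ℕ} (hC : C ⊆ D.full) (hx : x < m) (hcard : x + 2 ≤ C.ncard) :
      IsElusive M (M.levelSet C {b} x)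
  | climb {u : U} {S : Set B} {x : ℕ} (hu : u ∈ D.full) (hx₀ : 0 < x) (hx : x ≤ m)
      (hcard : 2 ^ (m - x + 1) ≤ S.ncard) : IsElusive M (M.levelSet {u} S x)

variable {M}

theorem IsElusive.nontrivial {T : Set P} (hT : M.IsElusive T) : T.Nontrivial := by
  cases hT with
  | @descend C b x hC hx hcard =>
    obtain ⟨u, hu, v, hv, hne⟩ := Set.one_lt_ncard_iff_nontrivial_and_finite.mp
      (show 1 < C.ncard by omega) |>.1
    exact ⟨_, ⟨u, hu, b, rfl, hC hu b, rfl⟩, _, ⟨v, hv, b, rfl, hC hv b, rfl⟩,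
      fun he => hne (((M.pt_eq_iff (hC hu b) (hC hv b) hx.le hx.le).mp he).2.1 hx)⟩
  | @climb u S x hu hx₀ hx hcard =>
    obtain ⟨b, hb, c, hc, hne⟩ := Set.one_lt_ncard_iff_nontrivial_and_finite.mp
      ((Nat.one_lt_two_pow (m - x).succ_ne_zero).trans_le hcard) |>.1
    exact ⟨_, ⟨u, rfl, b, hb, hu b, rfl⟩, _, ⟨u, rfl, c, hc, hu c, rfl⟩,
      fun he => hne (((M.pt_eq_iff (hu b) (hu c) hx hx).mp he).2.2 hx₀)⟩

variable (M)

theorem exists_isElusive_of_descend [Finite U] (h' : D.Rel u' b') (hy : y ≤ m) (hC : C ⊆ D.full)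
    (hx : x < m) (hcard : x + 3 ≤ C.ncard) {K : Set P} (hK : M.levelSet C {b} x ⊆ closedNbhd H K) :
    ∃ T, M.IsElusive T ∧ T ⊆ closedNbhd H K ∧
      ProbeBlind H (fun _ : Fin 1 => M.pt u' b' y) T := by
  have hdiff := Set.pred_ncard_le_ncard_sdiff_singleton C u'
  exact ⟨_, .descend (C := C \ {u'}) b (Set.sdiff_subset.trans hC) hx (by omega),
    (M.levelSet_mono Set.sdiff_subset subset_rfl).trans hK,
    M.probeBlind_levelSet_singleton_right h' hy (Set.sdiff_subset.trans hC)
      (fun hu' => hu'.2 rfl) hx.le⟩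

theorem exists_isElusive_of_zero [Finite B] (hB : 2 ^ m + 1 ≤ Nat.card B) (h' : D.Rel u' b')
    (hy : y ≤ m) (hC : C ⊆ D.full) (hcard : 2 ≤ C.ncard) :
    ∃ T, M.IsElusive T ∧ T ⊆ closedNbhd H (M.levelSet C {b} 0) ∧
      ProbeBlind H (fun _ : Fin 1 => M.pt u' b' y) T := by
  by_cases hu' : u' ∈ C
  · have hdiff := Set.pred_ncard_le_ncard_sdiff_singleton Set.univ b'
    rw [Set.ncard_univ] at hdiff
    have hpow : 2 ^ (m - 1 + 1) ≤ (Set.univ \ {b'}).ncard := by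
      rw [Nat.sub_add_cancel M.pos]
      omega
    refine ⟨M.levelSet {u'} (Set.univ \ {b'}) 1, .climb (hC hu') one_pos M.pos hpow,
      (M.levelSet_succ_subset_closedNbhd M.pos).trans (closedNbhd_mono ?_),
      M.probeBlind_levelSet_singleton_left h' hy (fun hb' => hb'.2 rfl)
        (fun b₁ _ b₂ _ => iff_of_true (hC hu' b₁) (hC hu' b₂)) M.pos⟩
    exact (M.levelSet_mono (Set.singleton_subset_iff.mpr hu') subset_rfl).trans
      (M.levelSet_zero_subset hC _ b)
  · exact ⟨_, .descend b hC M.pos hcard, fun p hp => ⟨p, hp, .inl rfl⟩,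
      M.probeBlind_levelSet_singleton_right h' hy hC hu' m.zero_le⟩

theorem exists_isElusive_of_climb [Finite B] (h' : D.Rel u' b') (hy : y ≤ m) {u : U}
    (hu : u ∈ D.full) (hx : x < m) (hcard : 2 ^ (m - x + 1) ≤ S.ncard) :
    ∃ T, M.IsElusive T ∧ T ⊆ closedNbhd H (M.levelSet {u} S x) ∧
      ProbeBlind H (fun _ : Fin 1 => M.pt u' b' y) T := by
  have hpow : 2 * 2 ^ (m - (x + 1) + 1) ≤ S.ncard := by
    rwa [← pow_succ', show m - (x + 1) + 1 = m - x by omega]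
  obtain ⟨S', hS', hcard', hb', hrel⟩ := D.exists_half_of_two_mul_le_ncard u' b' hpow
  exact ⟨_, .climb hu x.succ_pos hx hcard',
    (M.levelSet_mono subset_rfl hS').trans (M.levelSet_succ_subset_closedNbhd hx),
    M.probeBlind_levelSet_singleton_left h' hy hb' hrel hx⟩

theorem isEvasive_isElusive [Finite U] [Finite B] (hB : 2 ^ m + 1 ≤ Nat.card B)
    (hU : m + 2 ≤ D.full.ncard) : IsEvasive H 1 {T | M.IsElusive T} := by
  have hpos := M.pos
  have hprobe (p : Fin 1 → P) :
      ∃ u' b' y, D.Rel u' b' ∧ y ≤ m ∧ p = fun _ => M.pt u' b' y := by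
    obtain ⟨u', b', y, h', hy, hp⟩ := M.exists_eq_pt (p 0)
    exact ⟨u', b', y, h', hy, funext fun i => by rw [Subsingleton.elim i 0, hp]⟩
  refine ⟨fun T hT => hT.nontrivial, fun p => ?_, fun T hT p => ?_⟩
  · obtain ⟨u', b', y, h', hy, rfl⟩ := hprobe p
    obtain ⟨T, hT, -, hblind⟩ := M.exists_isElusive_of_descend (b := D.b₀) h' hy subset_rfl
      M.pos (by omega) fun q hq => ⟨q, hq, .inl rfl⟩
    exact ⟨T, hT, hblind⟩
  · obtain ⟨u', b', y, h', hy, rfl⟩ := hprobe p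
    cases hT with
    | @descend C b x hC hx hcard =>
      cases x with
      | zero => exact M.exists_isElusive_of_zero hB h' hy hC hcard
      | succ x =>
        exact M.exists_isElusive_of_descend h' hy hC (by omega) hcard
          (M.levelSet_subset_closedNbhd_succ (by omega))
    | @climb u S x hu hx₀ hx hcard =>
      rcases hx.lt_or_eq with hx | rfl
      · exact M.exists_isElusive_of_climb h' hy hu hx hcard
      obtain ⟨b, hb⟩ := Set.nonempty_of_ncard_ne_zero ((Nat.two_pow_pos _).trans_le hcard).ne'
      obtain ⟨x, rfl⟩ := Nat.exists_eq_add_one.mpr hx₀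
      exact M.exists_isElusive_of_descend (b := b) h' hy subset_rfl x.lt_succ_self (by omega)
        ((M.levelSet_subset_closedNbhd_succ x.lt_succ_self).trans (closedNbhd_mono
          ((M.levelSet_mono subset_rfl (Set.singleton_subset_iff.mpr hb)).trans
            (M.levelSet_top_subset hu _ S))))

theorem not_localizable_one [Finite U] [Finite B] [Finite P] (M : SubdivModel D H m)
    (hB : 2 ^ m + 1 ≤ Nat.card B) (hU : m + 2 ≤ D.full.ncard) : ¬Localizable H 1 :=
  (M.isEvasive_isElusive hB hU).not_localizable

end RobberStrategy

end SubdivModel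

section ResolvingSets

/-- The answer to probing a branch vertex, as a property of the right vertex `b` that hosts the
robber: a left vertex detects its neighbours, a right vertex detects itself. -/
def HubBigraph.Detects (D : HubBigraph U B) : U ⊕ B → B → Prop
  | .inl u, b => D.Rel u b
  | .inr b', b => b = b'

/-- The probes in `Q` tell all right vertices apart. -/
def HubBigraph.Resolves (D : HubBigraph U B) (Q : Set (U ⊕ B)) : Prop :=
  ∀ b₁ b₂, (∀ q ∈ Q, D.Detects q b₁ ↔ D.Detects q b₂) → b₁ = b₂

end ResolvingSets

namespace SubdivModel

section BranchVertices

variable (M : SubdivModel D H m)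

open Classical in
theorem dist_left_left (u' u : U) :
    H.dist (M.left u') (M.left u) = if u = u' then 0 else 2 * m := by
  refine (M.dist_left_pt u' (D.rel_b₀ u) m.zero_le).trans ?_
  simp [D.rel_b₀]

open Classical in
theorem dist_left_right (u : U) (b : B) :
    H.dist (M.left u) (M.right b) = if D.Rel u b then m else 3 * m := by
  refine (M.dist_left_pt u (D.rel_u₀ b) le_rfl).trans ?_
  have := D.rel_u₀
  grind

open Classical in
theorem dist_right_right (b' b : B) :
    H.dist (M.right b') (M.right b) = if b = b' then 0 else 2 * m := by
  refine (M.dist_right_pt b' (D.rel_u₀ b) le_rfl).trans ?_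
  simp [D.rel_u₀, two_mul]

/-- The branch vertices of `H`, indexed by the vertices of `D`. -/
def branch : U ⊕ B → P := Sum.elim M.left M.right

theorem left_injective : Function.Injective M.left := fun _ _ he =>
  ((M.pt_eq_iff (D.rel_b₀ _) (D.rel_b₀ _) m.zero_le m.zero_le).mp he).2.1 M.pos

theorem right_injective : Function.Injective M.right := fun _ _ he =>
  ((M.pt_eq_iff (D.rel_u₀ _) (D.rel_u₀ _) le_rfl le_rfl).mp he).2.2 M.pos

theorem dist_branch_right_eq_iff (q : U ⊕ B) (b₁ b₂ : B) :
    H.dist (M.branch q) (M.right b₁) = H.dist (M.branch q) (M.right b₂) ↔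
      (D.Detects q b₁ ↔ D.Detects q b₂) := by
  have := M.pos
  rcases q with u | b
  · simp only [branch, Sum.elim_inl, M.dist_left_right, HubBigraph.Detects]
    grind
  · simp only [branch, Sum.elim_inr, M.dist_right_right, HubBigraph.Detects]
    grind

theorem dist_branch_left_eq {u₁ u₂ : U} (h₁ : u₁ ∈ D.full) (h₂ : u₂ ∈ D.full) {q : U ⊕ B}
    (hq₁ : q ≠ .inl u₁) (hq₂ : q ≠ .inl u₂) :
    H.dist (M.branch q) (M.left u₁) = H.dist (M.branch q) (M.left u₂) := by
  rcases q with u | b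
  · simp only [branch, Sum.elim_inl, M.dist_left_left]
    grind
  · simp only [branch, Sum.elim_inr, H.dist_comm (u := M.right b), M.dist_left_right, h₁ b, h₂ b]

end BranchVertices

section LocalizationNumber

variable (M : SubdivModel D H 1)

theorem branch_surjective : Function.Surjective M.branch := by
  intro p
  obtain ⟨u, b, x, h, hx, rfl⟩ := M.exists_eq_pt p
  rcases Nat.le_one_iff_eq_zero_or_eq_one.mp hx with rfl | rfl
  · exact ⟨.inl u, (M.pt_zero h).symm⟩
  · exact ⟨.inr b, (M.pt_top h).symm⟩

theorem adj_left_right {u : U} {b : B} (h : D.Rel u b) : H.Adj (M.left u) (M.right b) := by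
  rw [← M.pt_zero h, ← M.pt_top h]
  exact M.pt_adj h one_pos

theorem not_adj_left_left (u v : U) : ¬H.Adj (M.left u) (M.left v) := by
  rw [← dist_eq_one_iff_adj, M.dist_left_left]
  split_ifs <;> simp

/-- The candidate sets maintained by the robber on `D` itself: two full left vertices, or two right
vertices. -/
inductive IsElusivePair (M : SubdivModel D H 1) : Set P → Prop
  | left {u₁ u₂ : U} (h₁ : u₁ ∈ D.full) (h₂ : u₂ ∈ D.full) (hne : u₁ ≠ u₂) :
      IsElusivePair M {M.left u₁, M.left u₂}
  | right {b₁ b₂ : B} (hne : b₁ ≠ b₂) : IsElusivePair M {M.right b₁, M.right b₂}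

theorem exists_blind_left_pair [Finite U] {k : ℕ} (hU : k + 2 ≤ D.full.ncard)
    (q : Fin k → U ⊕ B) : ∃ T, M.IsElusivePair T ∧ T ⊆ M.left '' D.full ∧
      ProbeBlind H (M.branch ∘ q) T := by
  let probed : Set U := Sum.inl ⁻¹' Set.range q
  have hprobed : probed.ncard ≤ k := by
    rw [← Set.ncard_image_of_injective _ (Sum.inl_injective (β := B))]
    refine (Set.ncard_le_ncard (Set.image_preimage_subset _ _) (Set.finite_range q)).trans ?_
    rw [← Set.image_univ]
    simpa using Set.ncard_image_le (f := q) Set.finite_univ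
  have hfree : 1 < (D.full \ probed).ncard := by
    have := Set.ncard_le_ncard_sdiff_add_ncard D.full probed
    omega
  obtain ⟨u₁, h₁, u₂, h₂, hne⟩ := (Set.one_lt_ncard_iff_nontrivial_and_finite.mp hfree).1
  refine ⟨_, .left h₁.1 h₂.1 hne,
    Set.pair_subset (Set.mem_image_of_mem _ h₁.1) (Set.mem_image_of_mem _ h₂.1),
    probeBlind_pair fun i => M.dist_branch_left_eq h₁.1 h₂.1 ?_ ?_⟩
  · exact fun he => h₁.2 ⟨i, he⟩
  · exact fun he => h₂.2 ⟨i, he⟩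

theorem exists_blind_right_pair {k : ℕ}
    (hQ : ∀ Q : Finset (U ⊕ B), D.Resolves Q → k ≤ Q.card)
    (q : Fin k → U ⊕ B) {i₀ : Fin k} {u : U} (hu : u ∈ D.full) (hi₀ : q i₀ = .inl u) :
    ∃ b₁ b₂, b₁ ≠ b₂ ∧ ProbeBlind H (M.branch ∘ q) {M.right b₁, M.right b₂} := by
  classical
  let Q : Finset (U ⊕ B) := (Finset.univ.erase i₀).image q
  have hcard : Q.card < k := by
    refine Finset.card_image_le.trans_lt ?_
    simpa using Finset.card_erase_lt_of_mem (Finset.mem_univ i₀)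
  have hnot : ¬D.Resolves Q := fun h => (hQ Q h).not_gt hcard
  simp only [HubBigraph.Resolves, not_forall] at hnot
  obtain ⟨b₁, b₂, hblind, hne⟩ := hnot
  refine ⟨b₁, b₂, hne, probeBlind_pair fun i => (M.dist_branch_right_eq_iff _ _ _).mpr ?_⟩
  by_cases hi : i = i₀
  · rw [hi, hi₀]
    exact iff_of_true (hu b₁) (hu b₂)
  · exact hblind _ (Finset.mem_image_of_mem q (by simpa using hi))

theorem isEvasive_isElusivePair [Finite U] {k : ℕ}
    (hQ : ∀ Q : Finset (U ⊕ B), D.Resolves Q → k ≤ Q.card) (hU : k + 2 ≤ D.full.ncard) :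
    IsEvasive H k {T | M.IsElusivePair T} := by
  refine ⟨fun T hT => ?_, fun p => ?_, fun T hT p => ?_⟩
  · cases hT with
    | left _ _ hne => exact Set.nontrivial_pair (M.left_injective.ne hne)
    | right hne => exact Set.nontrivial_pair (M.right_injective.ne hne)
  · obtain ⟨q, rfl⟩ := M.branch_surjective.comp_left p
    obtain ⟨T, hT, -, hblind⟩ := M.exists_blind_left_pair hU q
    exact ⟨T, hT, hblind⟩
  · obtain ⟨q, rfl⟩ := M.branch_surjective.comp_left p
    cases hT with
    | @left u₁ u₂ h₁ h₂ hne =>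
      by_cases hprobed : ∃ i, ∃ u ∈ D.full, q i = .inl u
      · obtain ⟨i, u, hu, hi⟩ := hprobed
        obtain ⟨b₁, b₂, hne, hblind⟩ := M.exists_blind_right_pair hQ q hu hi
        exact ⟨_, .right hne, Set.pair_subset
          ⟨_, .inl rfl, .inr (M.adj_left_right (h₁ b₁))⟩
          ⟨_, .inl rfl, .inr (M.adj_left_right (h₁ b₂))⟩, hblind⟩
      · push Not at hprobed
        exact ⟨_, .left h₁ h₂ hne, fun v hv => ⟨v, hv, .inl rfl⟩, probeBlind_pair fun i =>
          M.dist_branch_left_eq h₁ h₂ (hprobed i _ h₁) (hprobed i _ h₂)⟩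
    | @right b₁ b₂ hne =>
      obtain ⟨T, hT, hsub, hblind⟩ := M.exists_blind_left_pair hU q
      refine ⟨T, hT, fun v hv => ?_, hblind⟩
      obtain ⟨u, hu, rfl⟩ := hsub hv
      exact ⟨_, .inl rfl, .inr (M.adj_left_right (hu b₁)).symm⟩

theorem closedNbhd_image_left_subset (C : Set U) :
    closedNbhd H (M.left '' C) ⊆ M.left '' C ∪ Set.range M.right := by
  rintro p ⟨_, ⟨u, hu, rfl⟩, rfl | hadj⟩
  · exact .inl ⟨u, hu, rfl⟩
  · obtain ⟨v | b, rfl⟩ := M.branch_surjective p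
    · exact absurd hadj (M.not_adj_left_left u v)
    · exact .inr ⟨b, rfl⟩

theorem isLeft_eq_of_dist_left_eq {u : U} {q r : U ⊕ B}
    (h : H.dist (M.left u) (M.branch q) = H.dist (M.left u) (M.branch r)) :
    q.isLeft = r.isLeft ∧ (q = .inl u ↔ r = .inl u) := by
  rcases q with v | b <;> rcases r with w | c <;>
    simp only [branch, Sum.elim_inl, Sum.elim_inr, M.dist_left_left, M.dist_left_right] at h <;>
    grind

theorem copWins_of_resolves [Finite U] {Q : Finset (U ⊕ B)} (hQ : D.Resolves Q) (C : Set U) :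
    CopWins H (Q.card + 1) (M.left '' C ∪ Set.range M.right) := by
  induction C using WellFoundedLT.induction with | ind C ih
  obtain ⟨u', hu'⟩ : ∃ u', C.Nonempty → u' ∈ C := by
    rcases C.eq_empty_or_nonempty with rfl | ⟨u, hu⟩
    · exact ⟨D.u₀, fun h => absurd h Set.not_nonempty_empty⟩
    · exact ⟨u, fun _ => hu⟩
  refine .of_probe (Fin.cons (M.left u') fun i => M.branch (Q.equivFin.symm i)) ?_
  rintro _ (⟨w, hw, rfl⟩ | ⟨b, rfl⟩)
  · by_cases hwu : w = u'
    · refine ⟨{M.left u'}, copWinsAfter_of_subsingleton Set.subsingleton_singleton, ?_⟩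
      rintro _ (⟨v, -, rfl⟩ | ⟨c, rfl⟩) he
      · have := M.isLeft_eq_of_dist_left_eq (q := .inl v) (r := .inl w) (he 0)
        grind
      · have := M.isLeft_eq_of_dist_left_eq (q := .inr c) (r := .inl w) (he 0)
        grind
    · refine ⟨M.left '' (C \ {u'}), fun _ => (ih _ (Set.sdiff_singleton_ssubset.mpr
        (hu' ⟨w, hw⟩))).mono (M.closedNbhd_image_left_subset _), ?_⟩
      rintro _ (⟨v, hv, rfl⟩ | ⟨c, rfl⟩) he
      · have := M.isLeft_eq_of_dist_left_eq (q := .inl v) (r := .inl w) (he 0)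
        exact ⟨v, ⟨hv, by grind⟩, rfl⟩
      · have := M.isLeft_eq_of_dist_left_eq (q := .inr c) (r := .inl w) (he 0)
        grind
  · refine ⟨{M.right b}, copWinsAfter_of_subsingleton Set.subsingleton_singleton, ?_⟩
    rintro _ (⟨v, -, rfl⟩ | ⟨c, rfl⟩) he
    · have := M.isLeft_eq_of_dist_left_eq (q := .inl v) (r := .inr b) (he 0)
      grind
    · refine congrArg M.right (hQ c b fun q hq => (M.dist_branch_right_eq_iff q c b).mp ?_)
      simpa using he (Q.equivFin ⟨q, hq⟩).succ

theorem localizable_of_resolves [Finite U] (M : SubdivModel D H 1) {Q : Finset (U ⊕ B)}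
    (hQ : D.Resolves Q) : Localizable H (Q.card + 1) := by
  refine ((M.copWins_of_resolves hQ Set.univ).mono fun p _ => ?_).localizable
  obtain ⟨u | b, rfl⟩ := M.branch_surjective p
  exacts [.inl ⟨u, trivial, rfl⟩, .inr ⟨b, rfl⟩]

theorem locNum_eq [Finite U] [Finite P] (M : SubdivModel D H 1) {Q : Finset (U ⊕ B)}
    (hQ : D.Resolves Q)
    (hmin : ∀ Q' : Finset (U ⊕ B), D.Resolves Q' → Q.card ≤ Q'.card)
    (hU : Q.card + 2 ≤ D.full.ncard) : locNum H = Q.card + 1 := by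
  refine le_antisymm (Nat.sInf_le (M.localizable_of_resolves hQ))
    (le_csInf ⟨_, M.localizable_of_resolves hQ⟩ fun k hk => ?_)
  by_contra! hlt
  exact (M.isEvasive_isElusivePair (fun Q' hQ' => (Nat.le_of_lt_succ hlt).trans (hmin Q' hQ'))
    (by omega)).not_localizable hk

end LocalizationNumber

end SubdivModel

section Threads

variable {V : Type*} [LinearOrder V] {G : SimpleGraph V} {a c a' c' : V} {x x' : ℕ}

theorem threadVert_zero (h : G.Adj a c) : threadVert G m a c h 0 = .inl a := by
  simp [threadVert]

theorem threadVert_top (hm : 0 < m) (h : G.Adj a c) : threadVert G m a c h m = .inl c := by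
  simp [threadVert, hm.ne']

theorem threadVert_of_lt (h : G.Adj a c) (hac : a < c) (hx₀ : 0 < x) (hx : x < m) :
    threadVert G m a c h x = .inr (⟨(a, c), h, hac⟩, ⟨x - 1, by omega⟩) := by
  simp [threadVert, hx₀.ne', hx.not_ge, hac]

theorem threadVert_symm (hm : 0 < m) (h : G.Adj a c) (hx : x ≤ m) :
    threadVert G m c a h.symm (m - x) = threadVert G m a c h x := by
  rcases Nat.eq_zero_or_pos x with rfl | hx₀
  · rw [threadVert_zero, Nat.sub_zero, threadVert_top hm]
  rcases hx.eq_or_lt with rfl | hxm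
  · rw [Nat.sub_self, threadVert_zero, threadVert_top hm]
  rcases h.ne.lt_or_gt with hac | hca
  · have hback : m - (m - x) - 1 = x - 1 := by omega
    have hx' : ¬m ≤ m - x := by omega
    simp [threadVert, hx₀.ne', hxm.not_ge, hx', hac, hac.not_gt, Nat.sub_eq_zero_iff_le, hback]
  · have hx' : ¬m ≤ m - x := by omega
    simp [threadVert, hx₀.ne', hxm.not_ge, hx', hca, hca.not_gt, Nat.sub_eq_zero_iff_le]

theorem threadVert_eq_inl_iff (hm : 0 < m) (h : G.Adj a c) (hx : x ≤ m) {v : V} :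
    threadVert G m a c h x = .inl v ↔ (x = 0 ∧ a = v) ∨ (x = m ∧ c = v) := by
  unfold threadVert
  split_ifs <;> grind

theorem threadVert_eq_threadVert_iff (h : G.Adj a c) (h' : G.Adj a' c') (hx₀ : 0 < x) (hx : x < m)
    (hx₀' : 0 < x') (hx' : x' < m) : threadVert G m a c h x = threadVert G m a' c' h' x' ↔
      (a = a' ∧ c = c' ∧ x = x') ∨ (a = c' ∧ c = a' ∧ x + x' = m) := by
  have := h.ne
  have := h'.ne
  simp only [threadVert, hx₀.ne', hx.not_ge, hx₀'.ne', hx'.not_ge, dite_false]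
  split_ifs <;> simp only [Sum.inr.injEq, Prod.mk.injEq, Subtype.mk.injEq, Fin.mk.injEq] <;> grind

theorem exists_eq_threadVert (e : {e : V × V // G.Adj e.1 e.2 ∧ e.1 < e.2}) (i : Fin (m - 1)) :
    (.inr (e, i) : SubVert V G m) = threadVert G m e.1.1 e.1.2 e.2.1 (i + 1) := by
  rw [threadVert_of_lt e.2.1 e.2.2 (by omega) (by omega)]
  rfl

theorem subPre_threadVert (h : G.Adj a c) (hac : a < c) (hx : x < m) :
    subPre G m (threadVert G m a c h x) (threadVert G m a c h (x + 1)) ∨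
      subPre G m (threadVert G m a c h (x + 1)) (threadVert G m a c h x) := by
  have hm : 0 < m := by omega
  rcases Nat.eq_zero_or_pos x with rfl | hx₀ <;>
    rcases (Nat.succ_le_of_lt hx).eq_or_lt with rfl | hxm
  · exact .inl (by simpa [threadVert_zero, threadVert_top, subPre] using h)
  · exact .inl (by simp [threadVert_zero, threadVert_of_lt h hac one_pos hxm, subPre])
  · refine .inr ?_
    rw [threadVert_top hm, threadVert_of_lt h hac hx₀ hx]
    exact .inr ⟨rfl, by grind⟩
  · refine .inl ?_
    rw [threadVert_of_lt h hac hx₀ hx, threadVert_of_lt h hac (by omega) hxm]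
    exact ⟨rfl, by grind⟩

theorem exists_threadVert_of_subPre (hm : 0 < m) {p q : SubVert V G m} (hpq : subPre G m p q) :
    ∃ a c h x, x < m ∧ s(p, q) = s(threadVert G m a c h x, threadVert G m a c h (x + 1)) := by
  rcases p with u | ⟨e, i⟩ <;> rcases q with v | ⟨e', j⟩
  · obtain ⟨rfl, h⟩ := hpq
    exact ⟨u, v, h, 0, one_pos, by simp [threadVert_zero, threadVert_top]⟩
  · rw [exists_eq_threadVert]
    rcases hpq with ⟨rfl, hj⟩ | ⟨rfl, hj⟩
    · exact ⟨_, _, e'.2.1, 0, hm, by rw [threadVert_zero, hj]⟩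
    · refine ⟨_, _, e'.2.1, j + 1, by omega, ?_⟩
      rw [show (j : ℕ) + 1 + 1 = m by omega, threadVert_top hm, Sym2.eq_swap]
  · exact hpq.elim
  · obtain ⟨rfl, hij⟩ := hpq
    simp only at hij
    refine ⟨_, _, e.2.1, i + 1, by omega, ?_⟩
    rw [exists_eq_threadVert, exists_eq_threadVert, hij]

theorem subdiv_adj_threadVert (h : G.Adj a c) (hx : x < m) :
    (Subdiv G m).Adj (threadVert G m a c h x) (threadVert G m a c h (x + 1)) := by
  have hm : 0 < m := by omega
  wlog hac : a < c generalizing a c x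
  · have hca := this h.symm (x := m - (x + 1)) (by omega) (h.ne.lt_or_gt.resolve_left hac)
    rw [threadVert_symm hm h hx, show m - (x + 1) + 1 = m - x by omega,
      threadVert_symm hm h hx.le] at hca
    exact hca.symm
  refine (fromRel_adj _ _ _).mpr ⟨fun he => ?_, subPre_threadVert h hac hx⟩
  have := h.ne
  rcases Nat.eq_zero_or_pos x with rfl | hx₀
  · rw [threadVert_zero, eq_comm, threadVert_eq_inl_iff hm h hx] at he
    grind
  rcases (Nat.succ_le_of_lt hx).eq_or_lt with rfl | hxm
  · rw [threadVert_top hm, threadVert_eq_inl_iff hm h hx.le] at he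
    grind
  · rw [threadVert_eq_threadVert_iff h h hx₀ hx (by omega) hxm] at he
    grind

theorem subdiv_adj_iff (hm : 0 < m) {p q : SubVert V G m} : (Subdiv G m).Adj p q ↔
    ∃ a c h x, x < m ∧ s(p, q) = s(threadVert G m a c h x, threadVert G m a c h (x + 1)) := by
  refine ⟨fun h => ?_, ?_⟩
  · rcases ((fromRel_adj _ _ _).mp h).2 with h | h
    · exact exists_threadVert_of_subPre hm h
    · simpa only [Sym2.eq_swap] using exists_threadVert_of_subPre hm h
  · rintro ⟨a, c, h, x, hx, he⟩
    rw [← mem_edgeSet, he]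
    exact subdiv_adj_threadVert h hx

end Threads

section Realization

namespace HubBigraph

variable {V : Type*} {e : U ⊕ B ≃ V} {u u' : U} {b b' : B} {x x' : ℕ}

/-- The graph `D`, with its vertices labelled by `V`. -/
def graph (D : HubBigraph U B) (e : U ⊕ B ≃ V) : SimpleGraph V where
  Adj v w := ∃ u b, D.Rel u b ∧ s(v, w) = s(e (.inl u), e (.inr b))
  symm := ⟨fun v w h => by rwa [Sym2.eq_swap]⟩
  loopless := ⟨by
    rintro v ⟨u, b, -, h⟩
    have := e.injective.ne (Sum.inl_ne_inr (a := u) (b := b))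
    grind⟩

theorem graph_adj (e : U ⊕ B ≃ V) (h : D.Rel u b) :
    (D.graph e).Adj (e (.inl u)) (e (.inr b)) :=
  ⟨u, b, h, rfl⟩

/-- A graph is its own subdivision with threads of length one. -/
def graphModel (D : HubBigraph U B) (e : U ⊕ B ≃ V) : SubdivModel D (D.graph e) 1 where
  pos := one_pos
  pt u b x := if x = 0 then e (.inl u) else e (.inr b)
  exists_eq_pt p := by
    obtain ⟨u | b, rfl⟩ := e.surjective p
    · exact ⟨u, D.b₀, 0, D.rel_b₀ u, zero_le_one, rfl⟩
    · exact ⟨D.u₀, b, 1, D.rel_u₀ b, le_rfl, rfl⟩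
  adj_iff p q := by simp [graph]
  pt_eq_iff {u u' b b' x x'} _ _ hx hx' := by
    rcases Nat.le_one_iff_eq_zero_or_eq_one.mp hx with rfl | rfl <;>
      rcases Nat.le_one_iff_eq_zero_or_eq_one.mp hx' with rfl | rfl <;> simp

variable [LinearOrder V]

/-- The point at distance `x` from `u` on the thread from `u` to `b`. -/
def threadPt (m : ℕ) (e : U ⊕ B ≃ V) (h : D.Rel u b) (x : ℕ) : SubVert V (D.graph e) m :=
  threadVert (D.graph e) m (e (.inl u)) (e (.inr b)) (graph_adj e h) x

theorem exists_threadPt_of_adj (hm : 0 < m) {a c : V} (h : (D.graph e).Adj a c) :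
    ∃ u b, ∃ hub : D.Rel u b, (∀ x, threadVert (D.graph e) m a c h x = threadPt m e hub x) ∨
      ∀ x ≤ m, threadVert (D.graph e) m a c h x = threadPt m e hub (m - x) := by
  obtain ⟨u, b, hub, hs⟩ := id h
  refine ⟨u, b, hub, ?_⟩
  rcases Sym2.eq_iff.mp hs with ⟨rfl, rfl⟩ | ⟨rfl, rfl⟩
  · exact .inl fun x => rfl
  · exact .inr fun x hx => (threadVert_symm hm h hx).symm

theorem exists_eq_threadPt (hm : 0 < m) (p : SubVert V (D.graph e) m) :
    ∃ u b, ∃ h : D.Rel u b, ∃ x ≤ m, p = threadPt m e h x := by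
  rcases p with v | ⟨d, i⟩
  · obtain ⟨u | b, rfl⟩ := e.surjective v
    · exact ⟨u, D.b₀, D.rel_b₀ u, 0, m.zero_le, (threadVert_zero _).symm⟩
    · exact ⟨D.u₀, b, D.rel_u₀ b, m, le_rfl, (threadVert_top hm _).symm⟩
  · rw [exists_eq_threadVert]
    obtain ⟨u, b, h, hfwd | hbwd⟩ := exists_threadPt_of_adj hm d.2.1
    · exact ⟨u, b, h, i + 1, by omega, hfwd _⟩
    · exact ⟨u, b, h, m - (i + 1), by omega, hbwd _ (by omega)⟩

theorem subdiv_graph_adj_iff (hm : 0 < m) (p q : SubVert V (D.graph e) m) :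
    (Subdiv (D.graph e) m).Adj p q ↔ ∃ u b, ∃ h : D.Rel u b, ∃ x < m,
      s(p, q) = s(threadPt m e h x, threadPt m e h (x + 1)) := by
  rw [subdiv_adj_iff hm]
  refine ⟨?_, fun ⟨u, b, h, x, hx, he⟩ => ⟨_, _, graph_adj e h, x, hx, he⟩⟩
  rintro ⟨a, c, h, x, hx, he⟩
  obtain ⟨u, b, hub, hfwd | hbwd⟩ := exists_threadPt_of_adj hm h
  · exact ⟨u, b, hub, x, hx, by rw [he, hfwd, hfwd]⟩
  · refine ⟨u, b, hub, m - (x + 1), by omega, ?_⟩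
    rw [he, hbwd x hx.le, hbwd (x + 1) hx, Sym2.eq_swap, show m - (x + 1) + 1 = m - x by omega]

theorem threadPt_eq_iff (hm : 0 < m) (h : D.Rel u b) (h' : D.Rel u' b') (hx : x ≤ m)
    (hx' : x' ≤ m) : threadPt m e h x = threadPt m e h' x' ↔
      x = x' ∧ (x < m → u = u') ∧ (0 < x → b = b') := by
  unfold threadPt
  rcases Nat.eq_zero_or_pos x with rfl | hx₀
  · rw [threadVert_zero, eq_comm, threadVert_eq_inl_iff hm _ hx']
    simp only [EmbeddingLike.apply_eq_iff_eq, Sum.inl.injEq, reduceCtorEq]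
    grind
  rcases hx.eq_or_lt with rfl | hxm
  · rw [threadVert_top hm, eq_comm, threadVert_eq_inl_iff hm _ hx']
    simp only [EmbeddingLike.apply_eq_iff_eq, Sum.inr.injEq, reduceCtorEq]
    grind
  rcases Nat.eq_zero_or_pos x' with rfl | hx₀'
  · rw [threadVert_zero, threadVert_eq_inl_iff hm _ hx]
    grind
  rcases hx'.eq_or_lt with rfl | hxm'
  · rw [threadVert_top hm, threadVert_eq_inl_iff hm _ hx]
    grind
  · rw [threadVert_eq_threadVert_iff _ _ hx₀ hxm hx₀' hxm']
    simp only [EmbeddingLike.apply_eq_iff_eq, Sum.inl.injEq, Sum.inr.injEq, reduceCtorEq]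
    grind

open Classical in
/-- The subdivision `Subdiv (D.graph e) m`, with its threads oriented from left to right. -/
noncomputable def subdivModel (D : HubBigraph U B) (e : U ⊕ B ≃ V) (hm : 0 < m) :
    SubdivModel D (Subdiv (D.graph e) m) m where
  pos := hm
  pt u b x := if h : D.Rel u b then threadPt m e h x else .inl (e (.inl u))
  exists_eq_pt p := by
    obtain ⟨u, b, h, x, hx, rfl⟩ := exists_eq_threadPt hm p
    exact ⟨u, b, x, h, hx, by rw [dif_pos h]⟩
  adj_iff p q := by
    rw [subdiv_graph_adj_iff hm]
    refine exists₂_congr fun u b => ⟨?_, ?_⟩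
    · rintro ⟨h, x, hx, he⟩
      exact ⟨x, h, hx, by simpa only [dif_pos h] using he⟩
    · rintro ⟨x, h, hx, he⟩
      exact ⟨h, x, hx, by simpa only [dif_pos h] using he⟩
  pt_eq_iff {u u' b b' x x'} h h' hx hx' := by
    rw [dif_pos h, dif_pos h', threadPt_eq_iff hm h h' hx hx']

end HubBigraph

theorem exists_graph_subdivNum_eq_of_tree [Finite U] [Finite B] (hm : 3 ≤ m)
    (hT : Tree D Set.Subsingleton (m - 1) {D.b₀}ᶜ ∨ 4 ≤ m ∧ Tree D (IsTripod D) (m - 2) {D.b₀}ᶜ)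
    (hB : 2 ^ (m - 1) + 1 ≤ Nat.card B) {Q : Finset (U ⊕ B)} (hQ : D.Resolves Q)
    (hmin : ∀ Q' : Finset (U ⊕ B), D.Resolves Q' → Q.card ≤ Q'.card)
    (hU : max Q.card m + 2 ≤ D.full.ncard) :
    ∃ (n : ℕ) (G : SimpleGraph (Fin n)),
      G.Connected ∧ subdivNum G = m ∧ locNum G = Q.card + 1 := by
  obtain ⟨n, ⟨e⟩⟩ := Finite.exists_equiv_fin (U ⊕ B)
  refine ⟨n, D.graph e, (D.graphModel e).connected, ?_, (D.graphModel e).locNum_eq hQ hmin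
    (by omega)⟩
  have hmem : m ∈ {k | 1 ≤ k ∧ Localizable (Subdiv (D.graph e) k) 1} :=
    ⟨by omega, (D.subdivModel e (by omega)).localizable_of_tree hm hT⟩
  refine le_antisymm (Nat.sInf_le hmem) (le_csInf ⟨m, hmem⟩ fun k ⟨hk, hloc⟩ => ?_)
  by_contra! hlt
  refine (D.subdivModel e hk).not_localizable_one (le_trans ?_ hB) (by omega) hloc
  have := Nat.pow_le_pow_right two_pos (Nat.le_sub_one_of_lt hlt)
  omega

end Realization

section Separation

open Classical in
theorem card_le_two_pow_of_separates {α β : Type*} {R : β → α → Prop} {S : Finset α} {Q : Finset β}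
    (h : ∀ a ∈ S, ∀ b ∈ S, (∀ q ∈ Q, R q a ↔ R q b) → a = b) : S.card ≤ 2 ^ Q.card := by
  rw [← Finset.card_powerset]
  refine Finset.card_le_card_of_injOn (fun a => {q ∈ Q | R q a})
    (fun a _ => Finset.mem_powerset.mpr (Finset.filter_subset _ _)) fun a ha b hb he => ?_
  exact h a ha b hb fun q hq => by simpa [hq] using Finset.ext_iff.mp he q

theorem HubBigraph.Resolves.card_le_two_pow [Fintype B] {Q : Finset (U ⊕ B)} (hQ : D.Resolves Q) :
    Fintype.card B ≤ 2 ^ Q.card :=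
  card_le_two_pow_of_separates (R := D.Detects) (S := Finset.univ) fun a _ b _ h => hQ a b h

end Separation

section Constructions

variable {ι X : Type*} {d N : ℕ}

/-- The bipartite graph with left vertices `ι` and right vertices `X`, made into a `HubBigraph` by
joining `b₀` to all left vertices and adding `N + 1` left vertices joined to everything. -/
def withHubs (R : ι → X → Prop) (b₀ : X) (N : ℕ) : HubBigraph (ι ⊕ Fin (N + 1)) X where
  Rel
    | .inl i, b => b = b₀ ∨ R i b
    | .inr _, _ => True
  b₀ := b₀
  rel_b₀
    | .inl _ => .inl rfl
    | .inr _ => trivial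
  u₀ := .inr 0
  rel_u₀ _ := trivial

theorem le_ncard_full_withHubs [Finite ι] (R : ι → X → Prop) (b₀ : X) :
    N + 1 ≤ (withHubs R b₀ N).full.ncard := by
  have hsub : Set.range Sum.inr ⊆ (withHubs R b₀ N).full := by
    rintro _ ⟨i, rfl⟩ _
    trivial
  simpa [Set.ncard_range_of_injective Sum.inr_injective] using Set.ncard_le_ncard hsub

/-- The right vertices are the vertices of the `d`-cube and a hub; the left vertices are the
coordinates of the cube and `N + 1` hubs. -/
def cube (d N : ℕ) : HubBigraph (Fin d ⊕ Fin (N + 1)) (Option (Finset (Fin d))) :=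
  withHubs (fun i b => ∀ s, b = some s → i ∈ s) none N

theorem tree_cube (d N : ℕ) : Tree (cube d N) Set.Subsingleton d {none}ᶜ := by
  refine .of_signatures .inl fun σ => ?_
  rintro (_ | s) ⟨hs, hsσ⟩ (_ | t) ⟨ht, htσ⟩
  · rfl
  · exact absurd rfl hs
  · exact absurd rfl ht
  · congr 1
    ext i
    simpa [cube, withHubs] using (hsσ i).trans (htσ i).symm

/-- A smallest resolving set of `cube d N`: the coordinates and the right hub. -/
def cubeProbes (d N : ℕ) : Finset ((Fin d ⊕ Fin (N + 1)) ⊕ Option (Finset (Fin d))) :=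
  insert (.inr none) (Finset.univ.image (Sum.inl ∘ Sum.inl))

theorem card_cubeProbes : (cubeProbes d N).card = d + 1 := by
  rw [cubeProbes, Finset.card_insert_of_notMem (by simp), Finset.card_image_of_injective _
    (Sum.inl_injective.comp Sum.inl_injective), Finset.card_univ, Fintype.card_fin]

theorem resolves_cubeProbes : (cube d N).Resolves (cubeProbes d N) := by
  intro b c h
  have hnone : b = none ↔ c = none := h (.inr none) (Finset.mem_insert_self _ _)
  have hcoord (i : Fin d) := h (.inl (.inl i)) (by simp [cubeProbes])
  rcases b with _ | s <;> rcases c with _ | t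
  · rfl
  · exact absurd (hnone.mp rfl) (by simp)
  · exact absurd (hnone.mpr rfl) (by simp)
  · congr 1
    ext i
    simpa [cube, withHubs, HubBigraph.Detects] using hcoord i

theorem card_cubeProbes_le {Q : Finset ((Fin d ⊕ Fin (N + 1)) ⊕ Option (Finset (Fin d)))}
    (hQ : (cube d N).Resolves Q) : (cubeProbes d N).card ≤ Q.card := by
  have hcard : 2 ^ d < 2 ^ Q.card := by simpa [Nat.succ_le_iff] using hQ.card_le_two_pow
  rw [card_cubeProbes]
  exact (Nat.pow_lt_pow_iff_right one_lt_two).mp hcard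

/-- The right vertices are triples `(p, 0), (p, 1), (p, 2)` indexed by the vertices `p` of the
`d`-cube, with `(univ, 2)` as the hub. The left vertices are the coordinates of the cube, for each
`p` two vertices `(p, k)` telling the triple of `p` apart, and `N + 1` hubs. -/
def tripleCube (d N : ℕ) : HubBigraph ((Fin d ⊕ Finset (Fin d) × Fin 2) ⊕ Fin (N + 1))
    (Finset (Fin d) × Fin 3) :=
  withHubs
    (fun
      | .inl i, b => i ∈ b.1
      | .inr s, b => b.1 = s.1 ∧ b.2 ≠ s.2.castSucc)
    (Finset.univ, 2) N

theorem tripleCube_rel_coord {i : Fin d} {b : Finset (Fin d) × Fin 3} :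
    (tripleCube d N).Rel (.inl (.inl i)) b ↔ i ∈ b.1 := by
  simp only [tripleCube, withHubs, or_iff_right_iff_imp]
  rintro rfl
  exact Finset.mem_univ i

theorem tripleCube_rel_separator {s : Finset (Fin d) × Fin 2} {b : Finset (Fin d) × Fin 3} :
    (tripleCube d N).Rel (.inl (.inr s)) b ↔
      b = (Finset.univ, 2) ∨ b.1 = s.1 ∧ b.2 ≠ s.2.castSucc :=
  Iff.rfl

theorem isTripod_tripleCube {p : Finset (Fin d)} {S : Set (Finset (Fin d) × Fin 3)}
    (hS : ∀ b ∈ S, b ≠ (Finset.univ, 2) ∧ b.1 = p) : IsTripod (tripleCube d N) S := by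
  refine ⟨.of_signatures (fun k => .inl (.inr (p, k))) fun σ => ?_, .inl (.inr (p, 0)),
    (p, 1), (p, 2), (p, 0), ?_, ?_, ?_, ?_, ?_⟩
  · rintro ⟨q, i⟩ ⟨hb, hbσ⟩ ⟨r, j⟩ ⟨hc, hcσ⟩
    obtain ⟨hb₀, rfl⟩ := hS _ hb
    obtain ⟨hc₀, rfl⟩ := hS _ hc
    have h (k : Fin 2) := (hbσ k).trans (hcσ k).symm
    simp only [tripleCube_rel_separator, hb₀, hc₀, Fin.forall_fin_two] at h
    grind
  · simp [tripleCube_rel_separator]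
  · simp [tripleCube_rel_separator]
  · simp [tripleCube_rel_separator]
  · simp
  · rintro ⟨q, i⟩ hb
    obtain ⟨-, rfl⟩ := hS _ hb
    fin_cases i <;> simp

theorem tree_tripleCube (d N : ℕ) :
    Tree (tripleCube d N) (IsTripod (tripleCube d N)) d {(Finset.univ, 2)}ᶜ := by
  classical
  refine .of_signatures (fun i => .inl (.inl i)) fun σ =>
    isTripod_tripleCube (p := {i | σ i}) fun b hb => ⟨hb.1, ?_⟩
  ext i
  simpa using tripleCube_rel_coord.symm.trans (hb.2 i)

/-- A smallest resolving set of `tripleCube d N`. One of the two vertices telling apart the triple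
of `univ` is missing, as the hub in this triple is adjacent to all the others. -/
def tripleCubeProbes (d N : ℕ) :
    Finset (((Fin d ⊕ Finset (Fin d) × Fin 2) ⊕ Fin (N + 1)) ⊕ Finset (Fin d) × Fin 3) :=
  (Finset.univ.erase (Finset.univ, 1)).image (Sum.inl ∘ Sum.inl ∘ Sum.inr)

theorem card_tripleCubeProbes : (tripleCubeProbes d N).card + 1 = 2 ^ (d + 1) := by
  rw [tripleCubeProbes, Finset.card_image_of_injective _
    (Sum.inl_injective.comp (Sum.inl_injective.comp Sum.inr_injective)),
    Finset.card_erase_add_one (Finset.mem_univ _)]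
  simp [pow_succ]

theorem resolves_tripleCubeProbes (hd : 0 < d) :
    (tripleCube d N).Resolves (tripleCubeProbes d N) := by
  have : NeZero d := ⟨hd.ne'⟩
  rintro ⟨p, i⟩ ⟨q, j⟩ h
  have hsep (r : Finset (Fin d)) (k : Fin 2) (hrk : r ≠ Finset.univ ∨ k = 0) :
      (i = 2 ∧ p = Finset.univ) ∨ (p = r ∧ i ≠ k.castSucc) ↔
      (j = 2 ∧ q = Finset.univ) ∨ (q = r ∧ j ≠ k.castSucc) := by
    simpa [HubBigraph.Detects, tripleCube_rel_separator, and_comm] using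
      h (.inl (.inl (.inr (r, k)))) (by grind [tripleCubeProbes])
  have hnonempty : (∅ : Finset (Fin d)) ≠ Finset.univ := Finset.univ_nonempty.ne_empty.symm
  have hp₀ := hsep p 0 (.inr rfl)
  have hq₀ := hsep q 0 (.inr rfl)
  have hempty := hsep ∅ 0 (.inr rfl)
  have hp₁ (hp : p ≠ Finset.univ) := hsep p 1 (.inl hp)
  have hq₁ (hq : q ≠ Finset.univ) := hsep q 1 (.inl hq)
  have hi : i = 0 ∨ i = 1 ∨ i = 2 := by omega
  have hj : j = 0 ∨ j = 1 ∨ j = 2 := by omega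
  simp only [Fin.castSucc_zero, Fin.castSucc_one] at hp₀ hq₀ hempty hp₁ hq₁
  by_cases hp : p = Finset.univ <;> by_cases hq : q = Finset.univ <;> grind

/-- The triple that a probe can tell apart, if there is any; the choice for the other probes is
arbitrary. -/
def owner : ((Fin d ⊕ Finset (Fin d) × Fin 2) ⊕ Fin (N + 1)) ⊕ Finset (Fin d) × Fin 3 →
    Finset (Fin d)
  | .inl (.inl (.inr s)) => s.1
  | .inr b => b.1
  | _ => Finset.univ

theorem detects_iff_of_owner_ne {p : Finset (Fin d)} {i j : Fin 3}
    (hi : (p, i) ≠ (Finset.univ, 2)) (hj : (p, j) ≠ (Finset.univ, 2))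
    {q : ((Fin d ⊕ Finset (Fin d) × Fin 2) ⊕ Fin (N + 1)) ⊕ Finset (Fin d) × Fin 3}
    (hq : owner q ≠ p) :
    (tripleCube d N).Detects q (p, i) ↔ (tripleCube d N).Detects q (p, j) := by
  rcases q with ((c | s) | n) | b
  · simp [HubBigraph.Detects, tripleCube_rel_coord]
  · have hsp : p ≠ s.1 := hq.symm
    simp [HubBigraph.Detects, tripleCube_rel_separator, hi, hj, hsp]
  · exact Iff.rfl
  · have hbp : p ≠ b.1 := hq.symm
    exact iff_of_false (fun he => hbp (congrArg Prod.fst he)) fun he => hbp (congrArg Prod.fst he)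

variable {Q : Finset (((Fin d ⊕ Finset (Fin d) × Fin 2) ⊕ Fin (N + 1)) ⊕ Finset (Fin d) × Fin 3)}

theorem card_le_two_pow_card_owner (hQ : (tripleCube d N).Resolves Q) {p : Finset (Fin d)}
    {S : Finset (Fin 3)} (hS : ∀ i ∈ S, (p, i) ≠ (Finset.univ, 2)) :
    S.card ≤ 2 ^ {q ∈ Q | owner q = p}.card := by
  refine card_le_two_pow_of_separates (R := fun q i => (tripleCube d N).Detects q (p, i))
    fun i hi j hj h => congrArg Prod.snd (hQ (p, i) (p, j) fun q hq => ?_)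
  by_cases hqp : owner q = p
  · exact h q (Finset.mem_filter.mpr ⟨hq, hqp⟩)
  · exact detects_iff_of_owner_ne (hS i hi) (hS j hj) hqp

theorem two_le_card_owner_add (hQ : (tripleCube d N).Resolves Q) (p : Finset (Fin d)) :
    2 ≤ {q ∈ Q | owner q = p}.card + if p = Finset.univ then 1 else 0 := by
  split_ifs with hp
  · have hpair := card_le_two_pow_card_owner hQ (p := p) (S := {0, 1}) (by simp)
    by_contra! hlt
    have hzero : {q ∈ Q | owner q = p}.card = 0 := by omega
    simp [hzero] at hpair
  · have htriple := card_le_two_pow_card_owner hQ (p := p) (S := Finset.univ) (by simp [hp])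
    by_contra! hlt
    have hone := htriple.trans (Nat.pow_le_pow_right two_pos (Nat.le_of_lt_succ hlt))
    simp at hone

theorem card_tripleCubeProbes_le (hQ : (tripleCube d N).Resolves Q) :
    (tripleCubeProbes d N).card ≤ Q.card := by
  refine Nat.le_of_succ_le_succ ?_
  calc (tripleCubeProbes d N).card + 1 = ∑ _p : Finset (Fin d), 2 := by
        rw [card_tripleCubeProbes]
        simp [pow_succ]
    _ ≤ ∑ p : Finset (Fin d),
          ({q ∈ Q | owner q = p}.card + if p = Finset.univ then 1 else 0) :=
        Finset.sum_le_sum fun p _ => two_le_card_owner_add hQ p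
    _ = Q.card + 1 := by
        rw [Finset.sum_add_distrib, Finset.sum_ite_eq', if_pos (Finset.mem_univ _),
          ← Finset.card_eq_sum_card_fiberwise fun q _ => Finset.mem_univ (owner q)]

theorem exists_graph_subdivNum_eq_of_three_le (hm : 3 ≤ m) :
    ∃ (n : ℕ) (G : SimpleGraph (Fin n)),
      G.Connected ∧ subdivNum G = m ∧ locNum G = 2 ^ (m - 1) := by
  rcases hm.eq_or_lt with rfl | hm4
  · simpa [card_cubeProbes] using exists_graph_subdivNum_eq_of_tree (D := cube 2 4) le_rfl
      (.inl (tree_cube 2 4)) (by simp) resolves_cubeProbes (fun _ => card_cubeProbes_le)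
      (by rw [card_cubeProbes]; exact le_ncard_full_withHubs _ _)
  · obtain ⟨d, rfl⟩ := Nat.exists_eq_add_of_le' (Nat.le_of_lt hm)
    have hcard := card_tripleCubeProbes (d := d) (N := 2 ^ (d + 1) + d + 3)
    have htwins := le_ncard_full_withHubs (N := 2 ^ (d + 1) + d + 3)
      (X := Finset (Fin d) × Fin 3) (ι := Fin d ⊕ Finset (Fin d) × Fin 2)
    simpa [hcard] using exists_graph_subdivNum_eq_of_tree (D := tripleCube d (2 ^ (d + 1) + d + 3))
      hm (.inr ⟨hm4, tree_tripleCube d _⟩) (by simp [pow_succ])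
      (resolves_tripleCubeProbes (by omega)) (fun _ => card_tripleCubeProbes_le)
      (le_trans (by omega) (htwins _ _))

theorem mul_lt_two_pow (C : ℕ) : C * (4 * C + 1) < 2 ^ (4 * C) := by
  have hlt := Nat.lt_two_pow_self (n := 2 * C)
  calc C * (4 * C + 1) < (2 * C + 1) * (2 * C + 1) := by nlinarith
    _ ≤ 2 ^ (2 * C) * 2 ^ (2 * C) := Nat.mul_le_mul hlt hlt
    _ = 2 ^ (4 * C) := by rw [← pow_add]; congr 1; omega

end Constructions

end LocatingGame

/-- For every `m ≥ 3` there is a finite connected graph `G` with `η(G) = m`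
and `ζ(G) = 2^(m-1)`; in particular `ζ` is not `O(η)`. -/
theorem exists_graph_subdivNum_eq_and_locNum_eq :
    (∀ m : ℕ, 3 ≤ m → ∃ (n : ℕ) (G : SimpleGraph (Fin n)),
      G.Connected ∧ subdivNum G = m ∧ locNum G = 2 ^ (m - 1)) ∧
    ¬ ∃ C : ℕ, 0 < C ∧ ∀ (n : ℕ) (G : SimpleGraph (Fin n)),
      G.Connected → 2 ≤ n → locNum G ≤ C * subdivNum G := by
  refine ⟨fun m hm => LocatingGame.exists_graph_subdivNum_eq_of_three_le hm, ?_⟩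
  rintro ⟨C, hC, h⟩
  obtain ⟨n, G, hconn, hη, hζ⟩ :=
    LocatingGame.exists_graph_subdivNum_eq_of_three_le (m := 4 * C + 1) (by omega)
  have hn : 2 ≤ n := by
    by_contra! hlt
    have : Subsingleton (Fin n) := Fin.subsingleton_iff_le_one.mpr (Nat.le_of_lt_succ hlt)
    exact (Nat.two_pow_pos _).ne (LocatingGame.locNum_eq_zero_of_subsingleton G ▸ hζ)
  have hle : 2 ^ (4 * C) ≤ C * (4 * C + 1) := by simpa [hη, hζ] using h n G hconn hn
  exact hle.not_gt (LocatingGame.mul_lt_two_pow C)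
end
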